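/- arXiv:1406.3062 — 12 statements merged into one kernel-verified Lean document; each statement's English description precedes it below -/
import Mathlib

section
/- Let I be a σ-ideal on ℝ satisfying the standing assumptions (ℝ ∉ I, translation invariance, scale invariance, Borel base, Steinhaus property). If B ⊆ ℝ is a Borel set with B ∉ I and D ⊆ ℝ is a countable dense subset of ℝ, then the complement ℝ \ (B + D) belongs to I (i.e., the Minkowski sum B + D is I-residual). -/
open Cardinal MeasureTheory Set
open scoped Pointwise

/-- `I` is a σ-ideal on `ℝ`. -/
def IsSigmaIdeal (I : Set (Set ℝ)) : Prop :=
  ∅ ∈ I ∧ (∀ A B : Set ℝ, A ⊆ B → B ∈ I → A ∈ I) ∧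
    ∀ f : ℕ → Set ℝ, (∀ n, f n ∈ I) → (⋃ n, f n) ∈ I

/-- The standing assumptions on the σ-ideal `I`: nontriviality, translation and scale
invariance, Borel base and the Steinhaus property. -/
def StandingIdeal (I : Set (Set ℝ)) : Prop :=
  IsSigmaIdeal I ∧
  Set.univ ∉ I ∧
  (∀ x : ℝ, ∀ S ∈ I, (fun y => x + y) '' S ∈ I) ∧
  (∀ x : ℝ, ∀ S ∈ I, (fun y => x * y) '' S ∈ I) ∧
  (∀ S ∈ I, ∃ B ∈ I, MeasurableSet B ∧ S ⊆ B) ∧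
  (∀ A B : Set ℝ, MeasurableSet A → MeasurableSet B → A ∉ I → B ∉ I →
    (interior (A - B)).Nonempty)

/-- `L` is an `I`-Luzin set. -/
def IsLuzinFor (I : Set (Set ℝ)) (L : Set ℝ) : Prop :=
  Cardinal.mk L = Cardinal.continuum ∧ ∀ S ∈ I, (L ∩ S).Countable

/-- `L` is a strong `I`-Luzin set. -/
def IsStrongLuzinFor (I : Set (Set ℝ)) (L : Set ℝ) : Prop :=
  IsLuzinFor I L ∧ ∀ B : Set ℝ, MeasurableSet B → B ∉ I → ¬ (L ∩ B).Countable

/-- `L` is a Luzin set. -/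
def IsLuzin (L : Set ℝ) : Prop :=
  Cardinal.mk L = Cardinal.continuum ∧ ∀ M : Set ℝ, IsMeagre M → (L ∩ M).Countable

/-- `L` is a strong Luzin set. -/
def IsStrongLuzin (L : Set ℝ) : Prop :=
  IsLuzin L ∧ ∀ B : Set ℝ, MeasurableSet B → ¬ IsMeagre B → ¬ (L ∩ B).Countable

/-- `S` is a Sierpiński set. -/
def IsSierpinski (S : Set ℝ) : Prop :=
  Cardinal.mk S = Cardinal.continuum ∧ ∀ N : Set ℝ, volume N = 0 → (S ∩ N).Countable

/-- `S` is a strong Sierpiński set. -/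
def IsStrongSierpinski (S : Set ℝ) : Prop :=
  IsSierpinski S ∧ ∀ B : Set ℝ, MeasurableSet B → 0 < volume B → ¬ (S ∩ B).Countable

/-- `X` is a Bernstein set. -/
def IsBernstein (X : Set ℝ) : Prop :=
  ∀ P : Set ℝ, Perfect P → P.Nonempty → (P ∩ X).Nonempty ∧ (P ∩ Xᶜ).Nonempty

/-- `A ⊆ ℝ²` is completely `𝓜`-nonmeasurable. -/
def CompletelyMeagerNonmeasurable (A : Set (ℝ × ℝ)) : Prop :=
  ∀ B : Set (ℝ × ℝ), MeasurableSet B → ¬ IsMeagre B → (A ∩ B).Nonempty ∧ ¬ B ⊆ A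

/-- `A ⊆ ℝ²` is completely `𝓝`-nonmeasurable. -/
def CompletelyNullNonmeasurable (A : Set (ℝ × ℝ)) : Prop :=
  ∀ B : Set (ℝ × ℝ), MeasurableSet B → 0 < volume B → (A ∩ B).Nonempty ∧ ¬ B ⊆ A

/-- `n`-fold Minkowski sum (with `nFoldSum A 0 = {0}`). -/
def nFoldSum (A : Set ℝ) : ℕ → Set ℝ
  | 0 => {0}
  | n + 1 => nFoldSum A n + A

theorem stmt_0 (I : Set (Set ℝ)) (hI : StandingIdeal I)
    (B : Set ℝ) (hB : MeasurableSet B) (hBI : B ∉ I)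
    (D : Set ℝ) (hDc : D.Countable) (hDd : Dense D) :
    (B + D)ᶜ ∈ I := by
  obtain ⟨_, _, _, _, _, hS⟩ := hI
  by_contra hC
  have hm : MeasurableSet (B + D) := by
    have h : B + D = ⋃ d ∈ D, (fun y => y - d) ⁻¹' B := by
      ext x
      simp only [Set.mem_add, Set.mem_iUnion, Set.mem_preimage, exists_prop]
      constructor
      · rintro ⟨b, hb, d, hd, rfl⟩
        exact ⟨d, hd, by simpa using hb⟩
      · rintro ⟨d, hd, hb⟩
        exact ⟨x - d, hb, d, hd, by ring⟩
    rw [h]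
    exact MeasurableSet.biUnion hDc fun d _ => (measurable_id.sub_const d) hB
  obtain ⟨d, hd, hdD⟩ := hDd.inter_open_nonempty _ isOpen_interior (hS _ B hm.compl hB hC hBI)
  obtain ⟨c, hc, b, hb, h⟩ := Set.mem_sub.1 (interior_subset hd)
  exact hc (Set.mem_add.2 ⟨b, hb, d, hdD, by linarith⟩)
end

section
/- Let I be a σ-ideal on ℝ satisfying the standing assumptions (ℝ ∉ I, translation invariance, scale invariance, Borel base, Steinhaus property). If L ⊆ ℝ is an I-Luzin set, then the Minkowski sum L + ℚ = {l + q : l ∈ L, q ∈ ℚ} is a strong I-Luzin set. -/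
open Cardinal MeasureTheory Set
open scoped Pointwise

theorem stmt_1 (I : Set (Set ℝ)) (hI : StandingIdeal I)
    (L : Set ℝ) (hL : IsLuzinFor I L) :
    IsStrongLuzinFor I (L + Set.range ((↑) : ℚ → ℝ)) := by
  obtain ⟨⟨_, _, _⟩, _, htr, _, _, hst⟩ := hI
  obtain ⟨hc, hS⟩ := hL
  refine ⟨⟨?_, ?_⟩, ?_⟩
  · apply le_antisymm
    · exact (Cardinal.mk_set_le _).trans Cardinal.mk_real.le
    · rw [← hc]
      apply Cardinal.mk_le_mk_of_subset
      intro x hx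
      exact ⟨x, hx, 0, ⟨0, by simp⟩, by simp⟩
  · intro S hSI
    have h : (⋃ q : ℚ, (fun y : ℝ => y + (q : ℝ)) ''
        (L ∩ (fun y : ℝ => -(q : ℝ) + y) '' S)).Countable :=
      countable_iUnion fun q => (hS _ (htr _ S hSI)).image _
    refine h.mono ?_
    rintro _ ⟨⟨l, hl, _, ⟨q, rfl⟩, rfl⟩, hs⟩
    refine mem_iUnion.2 ⟨q, l, ⟨hl, _, hs, ?_⟩, rfl⟩
    simp
  · intro B hB hBI hcount
    set D : Set ℝ := ⋃ q : ℚ, (fun y : ℝ => y + (q : ℝ)) ⁻¹' B with hD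
    have hDm : MeasurableSet D :=
      MeasurableSet.iUnion fun q => (measurable_id.add_const (q : ℝ)) hB
    have hDI : Dᶜ ∈ I := by
      by_contra hn
      obtain ⟨x, hx⟩ := hst B Dᶜ hB hDm.compl hBI hn
      obtain ⟨_, hy, q, rfl⟩ := (Rat.denseRange_cast (𝕜 := ℝ)).inter_open_nonempty _
        isOpen_interior ⟨x, hx⟩
      obtain ⟨b, hb, a, ha, hab⟩ := interior_subset hy
      apply ha
      refine mem_iUnion.2 ⟨q, ?_⟩
      have : a + (q : ℝ) = b := by
        have h2 : b - a = (q : ℝ) := hab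
        linarith
      simpa [this] using hb
    have h1 : (⋃ q : ℚ, (fun y : ℝ => y - (q : ℝ)) ''
        ((L + Set.range ((↑) : ℚ → ℝ)) ∩ B)).Countable :=
      countable_iUnion fun q => hcount.image _
    have h2 : L.Countable := by
      refine ((hS _ hDI).union h1).mono ?_
      intro l hl
      by_cases hd : l ∈ D
      · right
        obtain ⟨q, hq⟩ := mem_iUnion.1 hd
        exact mem_iUnion.2 ⟨q, l + q, ⟨⟨l, hl, q, ⟨q, rfl⟩, rfl⟩, hq⟩, by simp⟩
      · exact Or.inl ⟨hl, hd⟩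
    have h3 := Cardinal.le_aleph0_iff_set_countable.2 h2
    rw [hc] at h3
    exact absurd h3 (not_le.2 Cardinal.aleph0_lt_continuum)
end

section
/- Assume CH. Let I be a σ-ideal on ℝ satisfying the standing assumptions (ℝ ∉ I, translation invariance, scale invariance, Borel base, Steinhaus property). Then there exists a family of 𝔠-many pairwise disjoint strong I-Luzin subsets of ℝ whose union is all of ℝ (a partition of ℝ into 𝔠 strong I-Luzin sets). -/
open Cardinal MeasureTheory Set
open scoped Pointwise

theorem sigma_countable_union {I : Set (Set ℝ)} (hI : IsSigmaIdeal I) {ι : Type*} [Countable ι]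
    (f : ι → Set ℝ) (hf : ∀ i, f i ∈ I) : (⋃ i, f i) ∈ I := by
  obtain ⟨h0, hsub, hU⟩ := hI
  rcases isEmpty_or_nonempty ι with h | h
  · simpa using h0
  · obtain ⟨e, he⟩ := exists_surjective_nat ι
    rw [← he.iUnion_comp]
    exact hU _ fun n => hf _

theorem sigma_union {I : Set (Set ℝ)} (hI : IsSigmaIdeal I) {A B : Set ℝ} (hA : A ∈ I)
    (hB : B ∈ I) : A ∪ B ∈ I := by
  rw [Set.union_eq_iUnion]
  exact sigma_countable_union hI _ (by rintro (_ | _) <;> simpa)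

theorem standing_singleton {I : Set (Set ℝ)} (hI : StandingIdeal I) (x : ℝ) : {x} ∈ I := by
  obtain ⟨_, _, htr, _, _, hst⟩ := hI
  by_contra hx
  have := hst {x} {x} (measurableSet_singleton x) (measurableSet_singleton x) hx hx
  simp at this

theorem standing_countable {I : Set (Set ℝ)} (hI : StandingIdeal I) {C : Set ℝ}
    (hC : C.Countable) : C ∈ I := by
  have := hC.to_subtype
  have h := sigma_countable_union hI.1 (fun c : C => ({(c : ℝ)} : Set ℝ))
    fun c => standing_singleton hI _
  simpa using h

theorem exists_surj {W α : Type} [Nonempty α] (h : Cardinal.mk α ≤ Cardinal.mk W) :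
    ∃ f : W → α, Function.Surjective f := by
  obtain ⟨g⟩ := h
  exact ⟨Function.invFun g, Function.invFun_surjective g.injective⟩

theorem borel_card_le : Cardinal.mk {B : Set ℝ // MeasurableSet B} ≤ Cardinal.continuum := by
  obtain ⟨b, hbc, hb⟩ :=
    MeasurableSpace.CountablyGenerated.isCountablyGenerated (α := ℝ)
  have := MeasurableSpace.cardinal_measurableSet_le_continuum
    ((Cardinal.le_aleph0_iff_set_countable.2 hbc).trans Cardinal.aleph0_le_continuum)
  rw [← hb] at this
  exact this

theorem stmt_2 (hCH : Cardinal.continuum = Cardinal.aleph 1)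
    (I : Set (Set ℝ)) (hI : StandingIdeal I) :
    ∃ F : Set (Set ℝ), Cardinal.mk F = Cardinal.continuum ∧
      (∀ L ∈ F, IsStrongLuzinFor I L) ∧
      F.PairwiseDisjoint id ∧ ⋃₀ F = Set.univ := by
  have hCH0 : Cardinal.continuum.{0} = Cardinal.aleph.{0} 1 := by
    apply Cardinal.lift_injective
    rw [Cardinal.lift_continuum, Cardinal.lift_aleph, Ordinal.lift_one]
    exact hCH
  have hI' := hI
  obtain ⟨hS, huniv, -, -, hbase, -⟩ := hI'
  obtain ⟨W, hlo, hwf, hWc, hseg⟩ : ∃ (W : Type) (_ : LinearOrder W) (_ : WellFoundedLT W),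
      Cardinal.mk W = Cardinal.continuum ∧ ∀ a : W, (Set.Iic a).Countable := by
    refine ⟨(Cardinal.aleph 1).ord.ToType, inferInstance, inferInstance, by simp [hCH0], ?_⟩
    intro a
    have h : (Set.Iio a).Countable := by
      rw [← Cardinal.le_aleph0_iff_set_countable, ← Order.lt_succ_iff, Cardinal.succ_aleph0]
      exact Cardinal.mk_Iio_toType_ord_lt a
    rw [← Set.Iio_insert]
    exact h.insert a
  have : Nonempty W := by
    rw [← Cardinal.mk_ne_zero_iff, hWc]; exact Cardinal.continuum_ne_zero
  let NB := {B : Set ℝ // MeasurableSet B ∧ B ∈ I}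
  let PB := {B : Set ℝ // MeasurableSet B ∧ B ∉ I}
  have : Nonempty NB := ⟨⟨∅, MeasurableSet.empty, hS.1⟩⟩
  have : Nonempty PB := ⟨⟨univ, MeasurableSet.univ, huniv⟩⟩
  have hNB : Cardinal.mk NB ≤ Cardinal.continuum :=
    (Cardinal.mk_subtype_mono fun B h => h.1).trans borel_card_le
  have hPB : Cardinal.mk PB ≤ Cardinal.continuum :=
    (Cardinal.mk_subtype_mono fun B h => h.1).trans borel_card_le
  obtain ⟨S, hSs⟩ := exists_surj (W := W) (α := NB) (by rw [hWc]; exact hNB)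
  obtain ⟨e, he⟩ := exists_surj (W := W) (α := W × PB) (by
    rw [Cardinal.mk_prod, Cardinal.lift_id, Cardinal.lift_id, hWc]
    calc _ ≤ Cardinal.continuum * Cardinal.continuum := by gcongr
      _ = _ := Cardinal.continuum_mul_self)
  obtain ⟨h⟩ : Nonempty (ℝ ≃ W) := by
    rw [← Cardinal.eq, hWc, Cardinal.mk_real]
  have step : ∀ (d : W) (f : ∀ b, b < d → ℝ), ∃ x : ℝ, x ∈ (e d).2.1 ∧
      (∀ b, b ≤ d → x ∉ (S b).1) ∧ ∀ b (hb : b < d), x ≠ f b hb := by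
    intro d f
    by_contra hcon
    push Not at hcon
    have := (hseg d).to_subtype
    have : Countable (Set.Iio d) := ((hseg d).mono Set.Iio_subset_Iic_self).to_subtype
    have h1 := sigma_countable_union hS (fun b : Set.Iic d => (S b).1) fun b => (S b).2.2
    have h2 := standing_countable hI
      (Set.countable_range (fun b : Set.Iio d => f b b.2))
    refine (e d).2.2.2 (hS.2.1 _ _ ?_ (sigma_union hS h1 h2))
    intro x hx
    by_cases hxS : ∃ b, b ≤ d ∧ x ∈ (S b).1
    · obtain ⟨b, hb, hxb⟩ := hxS
      exact Or.inl (Set.mem_iUnion.2 ⟨⟨b, hb⟩, hxb⟩)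
    · push Not at hxS
      obtain ⟨b, hb, hxb⟩ := hcon x hx hxS
      exact Or.inr ⟨⟨b, hb⟩, hxb.symm⟩
  choose nx hnx1 hnx2 hnx3 using step
  let p : W → ℝ := wellFounded_lt.fix nx
  have hp : ∀ d, p d = nx d (fun b _ => p b) := fun d => wellFounded_lt.fix_eq nx d
  have hp1 : ∀ d, p d ∈ (e d).2.1 := fun d => by rw [hp]; apply hnx1
  have hp2 : ∀ d b, b ≤ d → p d ∉ (S b).1 := fun d b hb => by rw [hp]; apply hnx2; exact hb
  have hp3 : ∀ d b, b < d → p d ≠ p b := fun d b hb => by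
    rw [hp d]; exact hnx3 d (fun b _ => p b) b hb
  have hpi : Function.Injective p := by
    intro a b hab
    rcases lt_trichotomy a b with hlt | heq | hlt
    · exact absurd hab.symm (hp3 _ _ hlt)
    · exact heq
    · exact absurd hab (hp3 _ _ hlt)
  classical
  let g : ℝ → W := fun x => if hx : ∃ d, p d = x then (e hx.choose).1 else h x
  have hg1 : ∀ d, g (p d) = (e d).1 := by
    intro d
    have hx : ∃ d', p d' = p d := ⟨d, rfl⟩
    simp only [g, dif_pos hx]
    rw [hpi hx.choose_spec]
  have hg2 : ∀ x, (∀ d, p d ≠ x) → g x = h x := by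
    intro x hx
    have : ¬ ∃ d, p d = x := by push Not; exact hx
    simp only [g, dif_neg this]
  have hmeet : ∀ w (B : Set ℝ), MeasurableSet B → B ∉ I → (g ⁻¹' {w} ∩ B).Nonempty := by
    intro w B hB hBI
    obtain ⟨d, hd⟩ := he (w, ⟨B, hB, hBI⟩)
    refine ⟨p d, ?_, ?_⟩
    · simp [hg1, hd]
    · have := hp1 d
      rw [hd] at this
      exact this
  have hunc : ∀ w (B : Set ℝ), MeasurableSet B → B ∉ I → ¬ (g ⁻¹' {w} ∩ B).Countable := by
    intro w B hB hBI hc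
    obtain ⟨x, hx1, hx2, hx3⟩ := hmeet w (B \ (g ⁻¹' {w} ∩ B)) (hB.diff hc.measurableSet) (by
      intro hd
      refine hBI (hS.2.1 _ _ ?_ (sigma_union hS hd (standing_countable hI hc)))
      intro x hx
      by_cases hxx : x ∈ g ⁻¹' {w} ∩ B
      · exact Or.inr hxx
      · exact Or.inl ⟨hx, hxx⟩)
    exact hx3 ⟨hx1, hx2⟩
  have hne : ∀ w, (g ⁻¹' {w}).Nonempty := fun w =>
    (hmeet w univ MeasurableSet.univ huniv).mono inter_subset_left
  refine ⟨Set.range fun w => g ⁻¹' {w}, ?_, ?_, ?_, ?_⟩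
  · rw [Cardinal.mk_range_eq, hWc]
    intro a b hab
    obtain ⟨x, hx⟩ := hne a
    have hx' : x ∈ g ⁻¹' {b} := by
      have hab' : g ⁻¹' {a} = g ⁻¹' {b} := hab
      rwa [← hab']
    exact (show g x = a from hx).symm.trans hx'
  · rintro _ ⟨w, rfl⟩
    refine ⟨⟨?_, ?_⟩, hunc w⟩
    · apply le_antisymm
      · exact (Cardinal.mk_set_le _).trans Cardinal.mk_real.le
      · have h1 := hunc w univ MeasurableSet.univ huniv
        rw [Set.inter_univ, ← Cardinal.le_aleph0_iff_set_countable, not_le] at h1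
        rw [hCH0, ← Cardinal.succ_aleph0]
        exact Order.succ_le_of_lt h1
    · intro T hT
      obtain ⟨B, hBI, hB, hTB⟩ := hbase T hT
      obtain ⟨c, hc⟩ := hSs ⟨B, hB, hBI⟩
      refine (((hseg c).image p).insert (h.symm w)).mono ?_
      rintro x ⟨hx1, hx2⟩
      by_cases hx : ∃ d, p d = x
      · obtain ⟨d, rfl⟩ := hx
        refine Or.inr ⟨d, ?_, rfl⟩
        by_contra hdc
        refine hp2 d c (le_of_lt (not_le.1 hdc)) ?_
        rw [hc]
        exact hTB hx2
      · push Not at hx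
        left
        rw [Equiv.eq_symm_apply, ← hg2 x hx]
        exact hx1
  · rintro _ ⟨a, rfl⟩ _ ⟨b, rfl⟩ hab
    refine Disjoint.preimage _ ?_
    rw [Set.disjoint_singleton]
    rintro rfl
    exact hab rfl
  · refine Set.eq_univ_of_forall fun x => ⟨g ⁻¹' {g x}, ⟨g x, rfl⟩, rfl⟩
end

section
/- Assume CH. Then there exists a set A ⊆ ℝ² such that for every x ∈ ℝ the vertical slice A_x is co-countable in ℝ (its complement ℝ \ A_x is countable), and A is both completely 𝓜-nonmeasurable and completely 𝓝-nonmeasurable. -/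
open Cardinal MeasureTheory Set
open scoped Pointwise

theorem aux_choice {ι : Type} (hι : #ι ≤ Cardinal.aleph 1) (s : ι → Set ℝ)
    (hs : ∀ i, ¬ (s i).Countable) :
    ∃ f : ι → ℝ, Function.Injective f ∧ ∀ i, f i ∈ s i := by
  obtain ⟨_, _, hr⟩ := exists_ord_eq_type_lt ι
  have hc : ∀ i : ι, (Set.Iio i).Countable := by
    intro i
    have h := (mk_Iio_lt i hr).trans_le hι
    rw [← succ_aleph0, Order.lt_succ_iff] at h
    exact le_aleph0_iff_set_countable.1 h
  have key : ∀ (i : ι) (g : (j : ι) → j < i → ℝ),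
      ∃ x, x ∈ s i ∧ ∀ j (h : j < i), g j h ≠ x := by
    intro i g
    by_contra hcon
    push Not at hcon
    apply hs i
    have : Countable (Set.Iio i) := (hc i).to_subtype
    refine (Set.countable_range (fun j : Set.Iio i => g j.1 j.2)).mono ?_
    intro x hx
    obtain ⟨j, hj, e⟩ := hcon x hx
    exact ⟨⟨j, hj⟩, e⟩
  choose F hF1 hF2 using key
  have wf : WellFounded (fun a b : ι => a < b) := wellFounded_lt
  let f : ι → ℝ := wf.fix F
  have hf : ∀ i, f i = F i (fun j _ => f j) := fun i => wf.fix_eq F i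
  have hlt : ∀ i j, j < i → f j ≠ f i := by
    intro i j h
    rw [hf i]
    exact hF2 i (fun j _ => f j) j h
  refine ⟨f, ?_, ?_⟩
  · intro a b hab
    rcases lt_trichotomy a b with h | h | h
    · exact absurd hab (hlt _ _ h)
    · exact h
    · exact absurd hab.symm (hlt _ _ h)
  · intro i
    rw [hf i]
    exact hF1 _ _

theorem aux_meagre (B : Set (ℝ × ℝ)) (h : (Prod.fst '' B).Countable) : IsMeagre B := by
  have h1 : IsMeagre (⋃ x ∈ Prod.fst '' B, (Prod.fst ⁻¹' {x} : Set (ℝ × ℝ))) := by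
    refine isMeagre_biUnion h ?_
    intro x _
    apply IsNowhereDense.isMeagre
    have hcl : IsClosed (Prod.fst ⁻¹' {x} : Set (ℝ × ℝ)) :=
      isClosed_singleton.preimage continuous_fst
    rw [hcl.isNowhereDense_iff, ← Set.prod_univ, interior_prod_eq]
    simp
  refine h1.mono ?_
  intro p hp
  simp only [Set.mem_iUnion]
  exact ⟨p.1, ⟨p, hp, rfl⟩, rfl⟩

theorem aux_null (B : Set (ℝ × ℝ)) (h : (Prod.fst '' B).Countable) : volume B = 0 := by
  refine measure_mono_null (t := (Prod.fst '' B) ×ˢ (Set.univ : Set ℝ)) ?_ ?_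
  · intro p hp
    exact ⟨⟨p, hp, rfl⟩, trivial⟩
  · rw [Measure.volume_eq_prod, Measure.prod_prod, h.measure_zero, zero_mul]

theorem aux_card : #{B : Set (ℝ × ℝ) // MeasurableSet B} ≤ Cardinal.continuum := by
  have h := MeasurableSpace.cardinal_measurableSet_le_continuum
    (s := MeasurableSpace.countableGeneratingSet (ℝ × ℝ))
    ((le_aleph0_iff_set_countable.2
      (MeasurableSpace.countable_countableGeneratingSet)).trans aleph0_le_continuum)
  rwa [MeasurableSpace.generateFrom_countableGeneratingSet] at h

theorem aux_lift (hCH : Cardinal.continuum.{u} = Cardinal.aleph 1) :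
    Cardinal.continuum.{0} = Cardinal.aleph 1 := by
  apply Cardinal.lift_injective.{u, 0}
  simpa using hCH

theorem stmt_3 (hCH : Cardinal.continuum = Cardinal.aleph 1) :
    ∃ A : Set (ℝ × ℝ),
      (∀ x : ℝ, ({y : ℝ | (x, y) ∈ A}ᶜ).Countable) ∧
      CompletelyMeagerNonmeasurable A ∧ CompletelyNullNonmeasurable A := by
  let J := {B : {B : Set (ℝ × ℝ) // MeasurableSet B} // ¬ (Prod.fst '' B.1).Countable}
  have hJ : #(J × Bool) ≤ Cardinal.aleph 1 := by
    rw [← aux_lift hCH, mk_prod, lift_id, lift_id]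
    refine mul_le_of_le aleph0_le_continuum ((mk_subtype_le _).trans aux_card) ?_
    exact (mk_le_aleph0).trans aleph0_le_continuum
  obtain ⟨f, finj, hf⟩ := aux_choice hJ (fun i => Prod.fst '' i.1.1.1) (fun i => i.1.2)
  choose p hpB hpf using hf
  have hx : ∀ i j, (p i).1 = (p j).1 → i = j := by
    intro i j h
    rw [hpf, hpf] at h
    exact finj h
  have main : ∀ B : Set (ℝ × ℝ), MeasurableSet B → ¬ (Prod.fst '' B).Countable →
      ((Set.range fun b : J => p (b, true))ᶜ ∩ B).Nonempty ∧
        ¬ B ⊆ (Set.range fun b : J => p (b, true))ᶜ := by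
    intro B hB hc
    let b : J := ⟨⟨B, hB⟩, hc⟩
    refine ⟨⟨p (b, false), ?_, hpB (b, false)⟩, ?_⟩
    · rintro ⟨b', hb'⟩
      have := hx _ _ (congrArg Prod.fst hb')
      simp at this
    · intro hsub
      exact hsub (hpB (b, true)) ⟨b, rfl⟩
  refine ⟨(Set.range fun b : J => p (b, true))ᶜ, ?_, ?_, ?_⟩
  · intro x
    apply Set.Subsingleton.countable
    intro y hy z hz
    simp only [Set.mem_compl_iff, Set.mem_ofPred_eq, not_not] at hy hz
    obtain ⟨b, hb⟩ := hy
    obtain ⟨c, hc⟩ := hz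
    have h1 : (p (b, true)).1 = (p (c, true)).1 := by
      simp only at hb hc
      rw [hb, hc]
    have h2 := hx _ _ h1
    have h3 : p (b, true) = p (c, true) := by rw [h2]
    simp only at hb hc
    rw [hb, hc] at h3
    exact congrArg Prod.snd h3
  · intro B hB hm
    exact main B hB fun h => hm (aux_meagre B h)
  · intro B hB hm
    exact main B hB fun h => hm.ne' (aux_null B h)
end

section
/- Assume CH. Then there exists a set A ⊆ ℝ² such that every horizontal slice A^y is a strong Luzin set, every vertical slice A_x is a strong Sierpiński set, and A is both completely 𝓜-nonmeasurable and completely 𝓝-nonmeasurable. -/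
open Cardinal MeasureTheory Set
open scoped Pointwise

open Filter Topology

theorem aux_KU {s : Set (ℝ × ℝ)} (hs : s ∈ residual (ℝ × ℝ)) :
    ∀ᶠ x in residual ℝ, ∀ᶠ y in residual ℝ, (x, y) ∈ s := by
  obtain ⟨S, hSo, hSd, hSc, hS⟩ := mem_residual_iff.1 hs
  have key : ∀ V ∈ S, ∀ᶠ x in residual ℝ, ∀ᶠ y in residual ℝ, (x, y) ∈ V := by
    intro V hV
    have h1 : ∀ u ∈ TopologicalSpace.countableBasis ℝ,
        ∀ᶠ x in residual ℝ, ∃ y ∈ u, (x, y) ∈ V := by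
      intro u hu
      have huo := TopologicalSpace.isOpen_of_mem_countableBasis hu
      have hun := TopologicalSpace.nonempty_of_mem_countableBasis hu
      have he : {x : ℝ | ∃ y ∈ u, (x, y) ∈ V} = Prod.fst '' (V ∩ Prod.snd ⁻¹' u) := by
        ext x
        simp only [Set.mem_ofPred_eq, Set.mem_image, Set.mem_inter_iff, Set.mem_preimage]
        constructor
        · rintro ⟨y, hy, h⟩
          exact ⟨(x, y), ⟨h, hy⟩, rfl⟩
        · rintro ⟨⟨a, b⟩, ⟨h, hy⟩, rfl⟩
          exact ⟨b, hy, h⟩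
      change {x : ℝ | ∃ y ∈ u, (x, y) ∈ V} ∈ residual ℝ
      apply residual_of_dense_open
      · rw [he]
        exact isOpenMap_fst _ ((hSo V hV).inter (huo.preimage continuous_snd))
      · rw [dense_iff_inter_open]
        rintro W hW hWn
        obtain ⟨⟨a, b⟩, hab, hv⟩ :=
          (hSd V hV).inter_open_nonempty (W ×ˢ u) (hW.prod huo) (hWn.prod hun)
        exact ⟨a, hab.1, b, hab.2, hv⟩
    filter_upwards [(eventually_countable_ball
      (TopologicalSpace.countable_countableBasis ℝ)).2 h1] with x hx
    change {y : ℝ | (x, y) ∈ V} ∈ residual ℝ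
    apply residual_of_dense_open
    · exact (hSo V hV).preimage (by fun_prop : Continuous fun y : ℝ => (x, y))
    · rw [(TopologicalSpace.isBasis_countableBasis ℝ).dense_iff]
      intro o ho _
      obtain ⟨y, hy, hv⟩ := hx o ho
      exact ⟨y, hy, hv⟩
  filter_upwards [(eventually_countable_ball hSc).2 key] with x hx
  filter_upwards [(eventually_countable_ball hSc).2 hx] with y hy
  exact hS (Set.mem_sInter.2 hy)

theorem aux_meagre_s4 {B : Set (ℝ × ℝ)} (hB : MeasurableSet B)
    (h : ∀ x : ℝ, IsMeagre {y : ℝ | (x, y) ∈ B}) : IsMeagre B := by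
  obtain ⟨U, hU, hBU⟩ := hB.residualEq_isOpen
  have hE : ∀ᶠ p in residual (ℝ × ℝ), (p ∈ B ↔ p ∈ U) := hBU.mem_iff
  rcases U.eq_empty_or_nonempty with rfl | ⟨⟨a, b⟩, hab⟩
  · change Bᶜ ∈ residual _
    filter_upwards [hE] with p hp
    simpa using hp
  · exfalso
    have hd := dense_of_mem_residual (aux_KU hE)
    obtain ⟨x, hx, hx2⟩ := hd.inter_open_nonempty {x : ℝ | (x, b) ∈ U}
      (hU.preimage (by fun_prop : Continuous fun x : ℝ => (x, b))) ⟨a, hab⟩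
    have ho : IsOpen {y : ℝ | (x, y) ∈ U} :=
      hU.preimage (by fun_prop : Continuous fun y : ℝ => (x, y))
    refine not_isMeagre_of_isOpen ho ⟨b, hx⟩ ?_
    have h1 : ∀ᶠ y in residual ℝ, (x, y) ∉ B := h x
    have h2 : ∀ᶠ y in residual ℝ, ((x, y) ∈ B ↔ (x, y) ∈ U) := hx2
    change ∀ᶠ y in residual ℝ, (x, y) ∉ U
    filter_upwards [h1, h2] with y h1 h2
    rwa [← h2]

theorem aux_meagre' {B : Set (ℝ × ℝ)} (hB : MeasurableSet B)
    (h : ∀ y : ℝ, IsMeagre {x : ℝ | (x, y) ∈ B}) : IsMeagre B := by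
  have h1 : IsMeagre (Prod.swap ⁻¹' B) := aux_meagre_s4 (measurable_swap hB) h
  have h2 := h1.preimage_of_isOpenMap (f := Prod.swap) continuous_swap
    (Homeomorph.prodComm ℝ ℝ).isOpenMap
  rwa [← Set.preimage_comp, Prod.swap_swap_eq, Set.preimage_id] at h2

theorem aux_null_s4 {B : Set (ℝ × ℝ)} (hB : MeasurableSet B)
    (h : ∀ x : ℝ, volume {y : ℝ | (x, y) ∈ B} = 0) : volume B = 0 := by
  rw [Measure.volume_eq_prod, Measure.measure_prod_null hB]
  exact Eventually.of_forall h

theorem aux_null' {B : Set (ℝ × ℝ)} (hB : MeasurableSet B)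
    (h : ∀ y : ℝ, volume {x : ℝ | (x, y) ∈ B} = 0) : volume B = 0 := by
  have h1 : volume (Prod.swap ⁻¹' B) = 0 := aux_null_s4 (measurable_swap hB) h
  rwa [Measure.volume_eq_prod, (Measure.measurePreserving_swap
    (μ := (volume : Measure ℝ)) (ν := (volume : Measure ℝ))).measure_preimage
    hB.nullMeasurableSet] at h1

theorem aux_wo (hCH : Cardinal.continuum.{0} = Cardinal.aleph 1) :
    ∃ r : ℝ → ℝ → Prop, IsWellOrder ℝ r ∧ ∀ a, {b | r b a}.Countable := by
  obtain ⟨r, hr, h⟩ := Cardinal.ord_eq ℝ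
  refine ⟨r, hr, fun a => ?_⟩
  rw [Cardinal.countable_iff_lt_aleph_one, ← hCH, ← Cardinal.mk_real]
  exact Cardinal.card_typein_lt a h

theorem aux_strong (r : ℝ → ℝ → Prop) [IsWellOrder ℝ r] (hr : ∀ a, {b | r b a}.Countable)
    (F : Filter ℝ) [CountableInterFilter F]
    (hbase : ∀ s ∈ F, ∃ t ⊆ s, MeasurableSet t ∧ t ∈ F) (hsing : ∀ x, {x}ᶜ ∈ F) :
    ∃ L : Set ℝ, (∀ M, Mᶜ ∈ F → (L ∩ M).Countable) ∧
      ∀ B, MeasurableSet B → Bᶜ ∉ F → ¬ (L ∩ B).Countable := by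
  have hcard : #{s : Set ℝ // MeasurableSet s} ≤ #ℝ := by
    rw [Cardinal.mk_real]
    have h := MeasurableSpace.cardinal_measurableSet_le_continuum
      (s := TopologicalSpace.countableBasis ℝ)
      ((Cardinal.le_aleph0_iff_set_countable.2
        (TopologicalSpace.countable_countableBasis ℝ)).trans Cardinal.aleph0_le_continuum)
    rw [← (TopologicalSpace.isBasis_countableBasis ℝ).borel_eq_generateFrom,
      ← BorelSpace.measurable_eq (α := ℝ)] at h
    exact h
  have : Nonempty {s : Set ℝ // MeasurableSet s} := ⟨⟨∅, MeasurableSet.empty⟩⟩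
  obtain ⟨⟨g, hg⟩⟩ := hcard
  let e : ℝ → Set ℝ := fun a => (Function.invFun g a : {s : Set ℝ // MeasurableSet s}).1
  have he : ∀ s, MeasurableSet s → ∃ a, e a = s := fun s hs =>
    ⟨g ⟨s, hs⟩, congrArg Subtype.val (Function.leftInverse_invFun hg ⟨s, hs⟩)⟩
  have hex : ∀ a, ∃ x, (e a)ᶜ ∉ F → x ∈ e a ∧ ∀ b, r b a → (e b)ᶜ ∈ F → x ∉ e b := by
    intro a
    by_cases ha : (e a)ᶜ ∈ F
    · exact ⟨0, fun h => absurd ha h⟩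
    · by_contra hcon
      push Not at hcon
      apply ha
      have h1 : ∀ b ∈ {b | r b a}, ∀ᶠ x in F, ((e b)ᶜ ∈ F → x ∉ e b) := by
        intro b _
        by_cases hb : (e b)ᶜ ∈ F
        · filter_upwards [hb] with x hx _ using hx
        · exact Eventually.of_forall fun x h => absurd h hb
      filter_upwards [(eventually_countable_ball (hr a)).2 h1] with x hx hxa
      obtain ⟨b, hb1, hb2, hb3⟩ := (hcon x).2 hxa
      exact hx b hb1 hb2 hb3
  choose l hl using hex
  have hmeet : ∀ B, MeasurableSet B → Bᶜ ∉ F → (l '' {a | (e a)ᶜ ∉ F} ∩ B).Nonempty := by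
    intro B hB hBF
    obtain ⟨a, rfl⟩ := he B hB
    exact ⟨l a, ⟨a, hBF, rfl⟩, (hl a hBF).1⟩
  refine ⟨l '' {a | (e a)ᶜ ∉ F}, ?_, ?_⟩
  · intro M hM
    obtain ⟨t, htM, htm, htF⟩ := hbase _ hM
    obtain ⟨d, hd⟩ := he tᶜ htm.compl
    have hdF : (e d)ᶜ ∈ F := by rw [hd, compl_compl]; exact htF
    refine ((hr d).image l).mono ?_
    rintro _ ⟨⟨a, ha, rfl⟩, haM⟩
    refine ⟨a, ?_, rfl⟩
    rcases trichotomous_of r a d with h | h | h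
    · exact h
    · subst h; exact absurd hdF ha
    · refine absurd ?_ ((hl a ha).2 d h hdF)
      rw [hd]
      exact fun h => htM h haM
  · intro B hB hBF hc
    have hcF : (l '' {a | (e a)ᶜ ∉ F} ∩ B)ᶜ ∈ F := by
      have := (countable_bInter_mem hc (l := F) (s := fun x _ => ({x}ᶜ : Set ℝ))).2
        fun x _ => hsing x
      filter_upwards [this] with x hx hx2
      simp only [Set.mem_iInter] at hx
      exact hx x hx2 rfl
    obtain ⟨x, hx1, hx2, hx3⟩ := hmeet (B \ (l '' {a | (e a)ᶜ ∉ F} ∩ B))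
      (hB.diff hc.measurableSet) (by
        intro h
        apply hBF
        filter_upwards [h, hcF] with x h1 h2 h3
        exact h1 ⟨h3, h2⟩)
    exact hx3 ⟨hx1, hx2⟩

theorem aux_card_s4 (hCH : Cardinal.continuum.{0} = Cardinal.aleph 1) {L : Set ℝ}
    (h : ¬ L.Countable) : #L = Cardinal.continuum := by
  apply le_antisymm
  · rw [← Cardinal.mk_real]; exact Cardinal.mk_set_le L
  · rw [Cardinal.countable_iff_lt_aleph_one, not_lt] at h
    rw [hCH]; exact h

theorem stmt_4 (hCH : Cardinal.continuum = Cardinal.aleph 1) :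
    ∃ A : Set (ℝ × ℝ),
      (∀ y : ℝ, IsStrongLuzin {x : ℝ | (x, y) ∈ A}) ∧
      (∀ x : ℝ, IsStrongSierpinski {y : ℝ | (x, y) ∈ A}) ∧
      CompletelyMeagerNonmeasurable A ∧ CompletelyNullNonmeasurable A := by
  replace hCH : Cardinal.continuum.{0} = Cardinal.aleph 1 := by
    apply Cardinal.lift_injective
    rw [Cardinal.lift_continuum, hCH]
    simp
  obtain ⟨r, hwo, hr⟩ := aux_wo hCH
  obtain ⟨L, hL1, hL2⟩ := aux_strong r hr (residual ℝ)
    (fun s hs => by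
      obtain ⟨t, h1, h2, h3⟩ := mem_residual.1 hs
      exact ⟨t, h1, h2.measurableSet, residual_of_dense_Gδ h2 h3⟩)
    (fun x => residual_of_dense_open isOpen_compl_singleton (dense_compl_singleton x))
  obtain ⟨S, hS1, hS2⟩ := aux_strong r hr (ae (volume : Measure ℝ))
    (fun s hs => by
      refine ⟨(toMeasurable volume sᶜ)ᶜ, ?_, (measurableSet_toMeasurable _ _).compl, ?_⟩
      · exact Set.compl_subset_comm.1 (subset_toMeasurable _ _)
      · rw [mem_ae_iff, compl_compl, measure_toMeasurable]
        exact hs)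
    (fun x => by simp [mem_ae_iff])
  have hle : ∀ a, {b | ¬ r a b}.Countable := fun a => by
    refine ((hr a).union (Set.countable_singleton a)).mono fun b hb => ?_
    rcases trichotomous_of r a b with h | h | h
    · exact absurd h hb
    · exact Or.inr h.symm
    · exact Or.inl h
  have small : ∀ (T X B : Set ℝ) (c : ℝ), X ⊆ T ∪ {b | r b c} → (T ∩ B).Countable →
      (X ∩ B).Countable := fun T X B c h1 h2 =>
    (h2.union (hr c)).mono fun x hx => (h1 hx.1).imp (fun h => ⟨h, hx.2⟩) id
  have large : ∀ (T X B : Set ℝ) (c : ℝ), T ⊆ X ∪ {b | ¬ r c b} → ¬ (T ∩ B).Countable →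
      ¬ (X ∩ B).Countable := fun T X B c h1 h2 h3 => h2 <|
    (h3.union (hle c)).mono fun x hx => (h1 hx.1).imp (fun h => ⟨h, hx.2⟩) id
  let A : Set (ℝ × ℝ) := {p | (p.1 ∈ L ∧ r p.2 p.1) ∨ (p.2 ∈ S ∧ r p.1 p.2)}
  have hA1 : ∀ y, {x : ℝ | (x, y) ∈ A} ⊆ L ∪ {b | r b y} := fun y x hx =>
    hx.imp And.left And.right
  have hA2 : ∀ y, L ⊆ {x : ℝ | (x, y) ∈ A} ∪ {b | ¬ r y b} := fun y x hx => by
    by_cases h : r y x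
    · exact Or.inl (Or.inl ⟨hx, h⟩)
    · exact Or.inr h
  have hA3 : ∀ x, {y : ℝ | (x, y) ∈ A} ⊆ S ∪ {b | r b x} := fun x y hy =>
    (Or.symm hy).imp And.left And.right
  have hA4 : ∀ x, S ⊆ {y : ℝ | (x, y) ∈ A} ∪ {b | ¬ r x b} := fun x y hy => by
    by_cases h : r x y
    · exact Or.inl (Or.inr ⟨hy, h⟩)
    · exact Or.inr h
  have hLuz : ∀ y : ℝ, IsStrongLuzin {x : ℝ | (x, y) ∈ A} := by
    intro y
    have hb : ∀ B : Set ℝ, MeasurableSet B → ¬ IsMeagre B →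
        ¬ ({x : ℝ | (x, y) ∈ A} ∩ B).Countable := fun B hB hBm =>
      large L _ B y (hA2 y) (hL2 B hB hBm)
    refine ⟨⟨aux_card_s4 hCH ?_, fun M hM => small L _ M y (hA1 y) (hL1 M hM)⟩, hb⟩
    have := hb Set.univ MeasurableSet.univ (not_isMeagre_of_isOpen isOpen_univ ⟨0, trivial⟩)
    rwa [Set.inter_univ] at this
  have hSie : ∀ x : ℝ, IsStrongSierpinski {y : ℝ | (x, y) ∈ A} := by
    intro x
    have hb : ∀ B : Set ℝ, MeasurableSet B → 0 < volume B →
        ¬ ({y : ℝ | (x, y) ∈ A} ∩ B).Countable := fun B hB hBm =>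
      large S _ B x (hA4 x) (hS2 B hB (by rw [mem_ae_iff, compl_compl]; exact hBm.ne'))
    refine ⟨⟨aux_card_s4 hCH ?_, fun M hM => small S _ M x (hA3 x)
      (hS1 M (by rw [mem_ae_iff, compl_compl]; exact hM))⟩, hb⟩
    have := hb Set.univ MeasurableSet.univ (by simp)
    rwa [Set.inter_univ] at this
  have hG0 : volume {x : ℝ | Liouville x} = 0 := volume_setOfPred_liouville
  have hG1 : IsMeagre {x : ℝ | Liouville x}ᶜ := by
    rw [IsMeagre, compl_compl]; exact eventually_residual_liouville
  have hcm : ∀ C : Set ℝ, C.Countable → IsMeagre C := fun C hC => by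
    have := isMeagre_biUnion hC (f := fun x : ℝ => ({x} : Set ℝ)) (fun x _ =>
      residual_of_dense_open isOpen_compl_singleton (dense_compl_singleton x))
    simpa using this
  have hLn : ∀ y, volume {x : ℝ | (x, y) ∈ A} = 0 := fun y => by
    have h := ((hLuz y).1.2 _ hG1).measure_zero volume
    refine measure_mono_null (fun x hx => ?_) (measure_union_null h hG0)
    by_cases hl : Liouville x
    · exact Or.inr hl
    · exact Or.inl ⟨hx, hl⟩
  have hSm : ∀ x, IsMeagre {y : ℝ | (x, y) ∈ A} := fun x => by
    have h := hcm _ ((hSie x).1.2 _ hG0)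
    refine (h.union hG1).mono (fun y hy => ?_)
    by_cases hl : Liouville y
    · exact Or.inl ⟨hy, hl⟩
    · exact Or.inr hl
  refine ⟨A, hLuz, hSie, ?_, ?_⟩
  · intro B hB hBm
    constructor
    · by_contra hne
      refine hBm (aux_meagre' hB fun y => ?_)
      by_contra hy
      refine (hLuz y).2 _ (hB.preimage (by fun_prop : Measurable fun x : ℝ => (x, y))) hy ?_
      refine Set.countable_empty.mono fun x hx => hne ⟨(x, y), hx⟩
    · intro hBA
      exact hBm (aux_meagre_s4 hB fun x => (hSm x).mono fun y hy => hBA hy)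
  · intro B hB hBm
    constructor
    · by_contra hne
      refine hBm.ne' (aux_null_s4 hB fun x => ?_)
      by_contra hx
      refine (hSie x).2 _ (hB.preimage (by fun_prop : Measurable fun y : ℝ => (x, y)))
        (pos_iff_ne_zero.2 hx) ?_
      refine Set.countable_empty.mono fun y hy => hne ⟨(x, y), hy⟩
    · intro hBA
      exact hBm.ne' (aux_null' hB fun y => measure_mono_null (fun x hx => hBA hx) (hLn y))
end

section
/- Assume that a Luzin set exists. Then there exists a set A ⊆ ℝ² such that for every point p ∈ ℝ² and every nonzero vector v ∈ ℝ², the set {t ∈ ℝ : p + t·v ∈ A} is a strong Luzin set (i.e., the intersection of A with every straight line is a strong Luzin set under any affine parametrization of the line). -/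
open Cardinal MeasureTheory Set
open scoped Pointwise

lemma aux_countable_embed {L : Set ℝ} (hL : ∀ M : Set ℝ, IsMeagre M → (L ∩ M).Countable)
    {h : ℝ → ℝ} (hh : Topology.IsEmbedding h) {N : Set ℝ} (hN : IsMeagre N) :
    {u : ℝ | u ∈ N ∧ h u ∈ L}.Countable := by
  have h1 := hL _ (hh.isInducing.isMeagre_image hN)
  refine (h1.preimage hh.injective).mono ?_
  rintro u ⟨hu, hu'⟩
  exact ⟨hu', u, hu, rfl⟩

lemma aux_embed {a c : ℝ} (ha : 0 < a) :
    Topology.IsEmbedding (fun u : ℝ => a * Real.exp u ^ 2 + c) := by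
  have h1 : StrictMono (fun u : ℝ => a * Real.exp u ^ 2 + c) := by
    intro x y hxy
    have : Real.exp x < Real.exp y := Real.exp_lt_exp.2 hxy
    have h0 := Real.exp_pos x
    have : Real.exp x ^ 2 < Real.exp y ^ 2 := by gcongr
    have := mul_lt_mul_of_pos_left this ha
    simpa using this
  have h2 : Continuous (fun u : ℝ => a * Real.exp u ^ 2 + c) := by fun_prop
  apply h1.isEmbedding_of_ordConnected
  rw [← Set.image_univ]
  exact ((isPreconnected_univ).image _ h2.continuousOn).ordConnected

lemma aux_luzin {L : Set ℝ} (hL : ∀ M : Set ℝ, IsMeagre M → (L ∩ M).Countable)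
    {a w c : ℝ} (ha : 0 < a) {M : Set ℝ} (hM : IsMeagre M) :
    ({t : ℝ | a * (t - w) ^ 2 + c ∈ L} ∩ M).Countable := by
  have key : ∀ e : ℝ ≃ₜ ℝ, (∀ u, (e u - w) ^ 2 = u ^ 2) →
      ({t : ℝ | a * (t - w) ^ 2 + c ∈ L} ∩ M ∩ (fun u => e (Real.exp u)) '' univ).Countable := by
    intro e he
    have hN : IsMeagre ((fun u => e (Real.exp u)) ⁻¹' M) :=
      hM.preimage_of_isOpenMap (e.continuous.comp Real.continuous_exp)
        (e.isOpenMap.comp Real.isOpenEmbedding_exp.isOpenMap)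
    refine ((aux_countable_embed hL (aux_embed (c := c) ha) hN).image
      (fun u => e (Real.exp u))).mono ?_
    rintro _ ⟨⟨h1, h2⟩, u, -, rfl⟩
    refine ⟨u, ⟨h2, ?_⟩, rfl⟩
    simpa [he] using h1
  have k1 := key (Homeomorph.addLeft w) (by intro u; simp)
  have k2 := key ((Homeomorph.neg ℝ).trans (Homeomorph.addLeft w)) (by intro u; simp)
  refine ((k1.union k2).union (countable_singleton w)).mono ?_
  intro t ht
  rcases lt_trichotomy t w with h | h | h
  · refine Or.inl (Or.inr ⟨ht, Real.log (w - t), trivial, ?_⟩)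
    simp [Real.exp_log (sub_pos.2 h)]
  · exact Or.inr h
  · refine Or.inl (Or.inl ⟨ht, Real.log (t - w), trivial, ?_⟩)
    simp [Real.exp_log (sub_pos.2 h)]

lemma aux_strong_s5 {T : Set ℝ} (hT : ∀ M : Set ℝ, IsMeagre M → (T ∩ M).Countable)
    (hU : ∀ x y : ℝ, x < y → ¬ (T ∩ Icc x y).Countable)
    {B : Set ℝ} (hB : MeasurableSet B) (hBM : ¬ IsMeagre B) : ¬ (T ∩ B).Countable := by
  obtain ⟨U, hUo, hBU⟩ := hB.residualEq_isOpen
  have hd : IsMeagre {x | ¬ (x ∈ B ↔ x ∈ U)} := by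
    unfold IsMeagre
    filter_upwards [hBU] with x hx
    have : (x ∈ B) = (x ∈ U) := hx
    simp [this]
  have hne : U.Nonempty := by
    by_contra h
    rw [Set.not_nonempty_iff_eq_empty] at h
    subst h
    exact hBM (hd.mono (by intro x hx; simpa using hx))
  obtain ⟨x, hx⟩ := hne
  obtain ⟨ε, hε, hball⟩ := Metric.isOpen_iff.1 hUo x hx
  intro hc
  apply hU x (x + ε / 2) (by linarith)
  refine (hc.union (hT _ hd)).mono ?_
  rintro t ⟨ht, ht1, ht2⟩
  have htU : t ∈ U := by
    apply hball
    rw [Metric.mem_ball, Real.dist_eq, abs_lt]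
    constructor <;> linarith
  by_cases h : t ∈ B
  · exact Or.inl ⟨ht, h⟩
  · exact Or.inr ⟨ht, by simp [h, htU]⟩

lemma aux_main {L : Set ℝ} (hL : ∀ M : Set ℝ, IsMeagre M → (L ∩ M).Countable)
    (hI : ∀ x y : ℝ, x < y → ¬ (L ∩ Icc x y).Countable)
    (hc : ∀ x : ℝ, Cardinal.mk ↥(L ∩ Ici x) = Cardinal.continuum)
    {a w c : ℝ} (ha : 0 < a) : IsStrongLuzin {t : ℝ | a * (t - w) ^ 2 + c ∈ L} := by
  have hT := fun M => aux_luzin hL (w := w) (c := c) ha (M := M)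
  refine ⟨⟨?_, hT⟩, fun B hB hBM => aux_strong_s5 hT ?_ hB hBM⟩
  · apply le_antisymm
    · rw [← Cardinal.mk_real]
      exact Cardinal.mk_set_le _
    · rw [← hc c]
      refine le_trans (Cardinal.mk_le_mk_of_subset ?_)
        (Cardinal.mk_image_le (f := fun t : ℝ => a * (t - w) ^ 2 + c))
      rintro y ⟨hy, hy'⟩
      have h0 : 0 ≤ (y - c) / a := div_nonneg (sub_nonneg.2 hy') ha.le
      have : a * (w + Real.sqrt ((y - c) / a) - w) ^ 2 + c = y := by
        rw [add_sub_cancel_left, Real.sq_sqrt h0]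
        field_simp
        ring
      exact ⟨w + Real.sqrt ((y - c) / a), (show a * (w + Real.sqrt ((y - c) / a) - w) ^ 2 + c ∈ L by rw [this]; exact hy), this⟩
  · intro x y hxy hcount
    set q : ℝ → ℝ := fun t : ℝ => a * (t - w) ^ 2 + c with hq
    have hqc : Continuous q := by rw [hq]; fun_prop
    have hs : ∃ x' y', x ≤ x' ∧ x' ≤ y' ∧ y' ≤ y ∧ q x' ≠ q y' := by
      by_cases h : q x = q y
      · refine ⟨x, (x + y) / 2, le_rfl, by linarith, by linarith, ?_⟩
        intro h'
        simp only [hq, add_left_inj, mul_right_inj' ha.ne'] at h h'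
        nlinarith [mul_pos (sub_pos.2 hxy) (sub_pos.2 hxy)]
      · exact ⟨x, y, le_rfl, hxy.le, le_rfl, h⟩
    obtain ⟨x', y', h1, h2, h3, h4⟩ := hs
    have himg : uIcc (q x') (q y') ⊆ q '' uIcc x' y' :=
      intermediate_value_uIcc hqc.continuousOn
    apply hI (min (q x') (q y')) (max (q x') (q y')) (min_lt_max.2 h4)
    refine (hcount.image q).mono ?_
    rintro z ⟨hz, hz'⟩
    obtain ⟨t, ht, rfl⟩ := himg hz'
    rw [uIcc_of_le h2] at ht
    exact ⟨t, ⟨hz, h1.trans ht.1, ht.2.trans h3⟩, rfl⟩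

lemma aux_exists (hL : ∃ L : Set ℝ, IsLuzin L) : ∃ L : Set ℝ,
    (∀ M : Set ℝ, IsMeagre M → (L ∩ M).Countable) ∧
    (∀ x y : ℝ, x < y → ¬ (L ∩ Icc x y).Countable) ∧
    (∀ x : ℝ, Cardinal.mk ↥(L ∩ Ici x) = Cardinal.continuum) := by
  obtain ⟨L, hcard, hM⟩ := hL
  let K : Set ℝ := ⋃ r : ℚ, (fun x : ℝ => (r : ℝ) + x) ⁻¹' L
  have hKinv : ∀ (x : ℝ) (r : ℚ), x ∈ K → (r : ℝ) + x ∈ K := by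
    intro x r hx
    obtain ⟨s, hs⟩ := mem_iUnion.1 hx
    refine mem_iUnion.2 ⟨s - r, ?_⟩
    have : ((s - r : ℚ) : ℝ) + (r + x) = s + x := by push_cast; ring
    show ((s - r : ℚ) : ℝ) + (r + x) ∈ L
    rw [this]
    exact hs
  have hLK : L ⊆ K := fun x hx => mem_iUnion.2 ⟨0, by simpa using hx⟩
  have hKc : Cardinal.mk K = Cardinal.continuum := by
    apply le_antisymm
    · rw [← Cardinal.mk_real]
      exact Cardinal.mk_set_le _
    · rw [← hcard]
      exact Cardinal.mk_le_mk_of_subset hLK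
  have hKunc : ¬ K.Countable := by
    intro h
    have := (Cardinal.le_aleph0_iff_set_countable).2 h
    rw [hKc] at this
    exact absurd this (not_le.2 Cardinal.aleph0_lt_continuum)
  refine ⟨K, ?_, ?_, ?_⟩
  · intro M hMM
    rw [iUnion_inter]
    refine countable_iUnion fun r => ?_
    have h1 := hM _ ((Homeomorph.addLeft (r : ℝ)).isInducing.isMeagre_image hMM)
    refine (h1.preimage (add_right_injective (r : ℝ))).mono ?_
    rintro x ⟨hx, hx'⟩
    exact ⟨hx, x, hx', rfl⟩
  · intro x y hxy hc
    apply hKunc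
    have : K ⊆ ⋃ r : ℚ, (fun z : ℝ => (r : ℝ) + z) ⁻¹' (K ∩ Icc x y) := by
      intro z hz
      obtain ⟨r, hr1, hr2⟩ := exists_rat_btwn (show x - z < y - z by linarith)
      refine mem_iUnion.2 ⟨r, hKinv z r hz, ?_, ?_⟩
      · show x ≤ (r : ℝ) + z
        linarith
      · show (r : ℝ) + z ≤ y
        linarith
    exact (countable_iUnion fun r : ℚ => hc.preimage (add_right_injective (r : ℝ))).mono this
  · intro x
    apply le_antisymm
    · rw [← Cardinal.mk_real]
      exact Cardinal.mk_set_le _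
    · by_contra hlt
      rw [not_le] at hlt
      have hsub : K ⊆ ⋃ r : ℚ, (fun z : ℝ => (r : ℝ) + z) '' (K ∩ Ici x) := by
        intro z hz
        obtain ⟨r, hr1⟩ := exists_rat_gt (x - z)
        refine mem_iUnion.2 ⟨-r, (r : ℝ) + z, ⟨hKinv z r hz, ?_⟩, by simp⟩
        show x ≤ (r : ℝ) + z
        linarith
      have h1 : Cardinal.mk K ≤ Cardinal.aleph0 * Cardinal.mk ↥(K ∩ Ici x) := by
        refine (Cardinal.mk_le_mk_of_subset hsub).trans ?_
        refine (Cardinal.mk_iUnion_le_sum_mk).trans ?_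
        refine (Cardinal.sum_le_sum _ (fun _ => Cardinal.mk ↥(K ∩ Ici x))
          (fun r => Cardinal.mk_image_le)).trans ?_
        simp
      rw [hKc] at h1
      exact absurd h1 (not_le.2
        (Cardinal.mul_lt_of_lt Cardinal.aleph0_le_continuum Cardinal.aleph0_lt_continuum hlt))

theorem stmt_5 (hL : ∃ L : Set ℝ, IsLuzin L) :
    ∃ A : Set (ℝ × ℝ), ∀ (p v : ℝ × ℝ), v ≠ 0 →
      IsStrongLuzin {t : ℝ | p + t • v ∈ A} := by
  obtain ⟨L, h1, h2, h3⟩ := aux_exists hL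
  refine ⟨{z | z.1 ^ 2 + z.2 ^ 2 ∈ L}, ?_⟩
  rintro ⟨p1, p2⟩ ⟨v1, v2⟩ hv
  have ha : 0 < v1 ^ 2 + v2 ^ 2 := by
    by_contra h
    apply hv
    have e1 : v1 = 0 := by nlinarith [sq_nonneg v1, sq_nonneg v2]
    have e2 : v2 = 0 := by nlinarith [sq_nonneg v1, sq_nonneg v2]
    simp [e1, e2]
  convert aux_main h1 h2 h3 ha (w := -(p1 * v1 + p2 * v2) / (v1 ^ 2 + v2 ^ 2))
    (c := p1 ^ 2 + p2 ^ 2 - (p1 * v1 + p2 * v2) ^ 2 / (v1 ^ 2 + v2 ^ 2)) using 3 with t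
  simp only [Prod.smul_mk, Prod.mk_add_mk, mem_ofPred_eq, smul_eq_mul]
  have : (p1 + t * v1) ^ 2 + (p2 + t * v2) ^ 2 = (v1 ^ 2 + v2 ^ 2) *
      (t - -(p1 * v1 + p2 * v2) / (v1 ^ 2 + v2 ^ 2)) ^ 2 +
      (p1 ^ 2 + p2 ^ 2 - (p1 * v1 + p2 * v2) ^ 2 / (v1 ^ 2 + v2 ^ 2)) := by
    field_simp
    ring
  rw [this]
end

section
/- Assume CH. Then there exists a set A ⊆ ℝ² such that for every point p ∈ ℝ² and every nonzero vector v ∈ ℝ², the set {t ∈ ℝ : p + t·v ∈ A} is a strong Luzin set, and moreover A is a Hamel basis of ℝ² over ℚ. -/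
open Cardinal MeasureTheory Set
open scoped Pointwise

/-- Meagre along every line. -/
def Thin6 (X : Set (ℝ × ℝ)) : Prop :=
  ∀ p v : ℝ × ℝ, v ≠ 0 → IsMeagre {t : ℝ | p + t • v ∈ X}

theorem countable_isMeagre6 {s : Set ℝ} (hs : s.Countable) : IsMeagre s := by
  have h := isMeagre_biUnion hs (f := fun x : ℝ => ({x} : Set ℝ)) (fun x _ => by
    apply IsNowhereDense.isMeagre
    simp [IsNowhereDense])
  simpa using h

theorem line_inj6 (p : ℝ × ℝ) {v : ℝ × ℝ} (hv : v ≠ 0) :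
    Function.Injective (fun t : ℝ => p + t • v) := by
  intro s t h
  have h' : s • v = t • v := add_left_cancel h
  exact smul_left_injective ℝ hv h'

theorem thin_countable6 {s : Set (ℝ × ℝ)} (hs : s.Countable) : Thin6 s := by
  intro p v hv
  exact countable_isMeagre6 (hs.preimage (line_inj6 p hv))

theorem thin_union6 {s t : Set (ℝ × ℝ)} (hs : Thin6 s) (ht : Thin6 t) : Thin6 (s ∪ t) := by
  intro p v hv
  exact (hs p v hv).union (ht p v hv)

theorem exists_functional6 (v w : ℝ × ℝ) (hv : v ≠ 0) (hw : w ≠ 0) :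
    ∃ a b : ℝ, a * v.1 + b * v.2 ≠ 0 ∧ a * w.1 + b * w.2 ≠ 0 := by
  have hv' : v.1 ≠ 0 ∨ v.2 ≠ 0 := by
    by_contra! h; exact hv (Prod.ext h.1 h.2)
  have hw' : w.1 ≠ 0 ∨ w.2 ≠ 0 := by
    by_contra! h; exact hw (Prod.ext h.1 h.2)
  by_cases h1 : v.1 ≠ 0 ∧ w.1 ≠ 0
  · exact ⟨1, 0, by simpa using h1.1, by simpa using h1.2⟩
  by_cases h2 : v.2 ≠ 0 ∧ w.2 ≠ 0
  · exact ⟨0, 1, by simpa using h2.1, by simpa using h2.2⟩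
  refine ⟨1, 1, ?_, ?_⟩ <;> grind

theorem thin_line6 (q w : ℝ × ℝ) (hw : w ≠ 0) (M : Set ℝ) (hM : IsMeagre M) :
    Thin6 ((fun t : ℝ => q + t • w) '' M) := by
  intro p v hv
  obtain ⟨a, b, h1, h2⟩ := exists_functional6 v w hv hw
  set c := a * v.1 + b * v.2 with hc
  set d := a * w.1 + b * w.2 with hd
  have hcd : c / d ≠ 0 := div_ne_zero h1 h2
  let e : ℝ ≃ₜ ℝ := (Homeomorph.mulLeft₀ (c / d) hcd).trans
    (Homeomorph.addLeft ((a * (p.1 - q.1) + b * (p.2 - q.2)) / d))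
  refine (hM.preimage_of_isOpenMap e.continuous e.isOpenMap).mono ?_
  rintro t ⟨s, hs, hst⟩
  have e1 := congrArg Prod.fst hst
  have e2 := congrArg Prod.snd hst
  simp at e1 e2
  have : e t = s := by
    change (a * (p.1 - q.1) + b * (p.2 - q.2)) / d + c / d * t = s
    field_simp
    rw [hc, hd]
    linear_combination (-a) * e1 - b * e2
  change e t ∈ M
  rw [this]; exact hs

theorem span_countable6 {S : Set (ℝ × ℝ)} (hS : S.Countable) :
    (Submodule.span ℚ S : Set (ℝ × ℝ)).Countable := by
  have : Countable S := hS
  have h := Finsupp.range_linearCombination ℚ (v := ((↑) : S → ℝ × ℝ))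
  rw [Subtype.range_coe] at h
  rw [← h]
  exact Set.countable_range (Finsupp.linearCombination ℚ ((↑) : S → ℝ × ℝ))

theorem step6 (p v : ℝ × ℝ) (B : Set ℝ) (X S : Set (ℝ × ℝ)) (hX : Thin6 X)
    (hS : S.Countable) (hi : LinearIndepOn ℚ id S) :
    ∃ T : Set (ℝ × ℝ), S ⊆ T ∧ T.Countable ∧ LinearIndepOn ℚ id T ∧
      (∀ x ∈ T, x ∉ S → x ∉ X) ∧ p ∈ Submodule.span ℚ T ∧
      (v ≠ 0 → ¬ IsMeagre B → ∃ t ∈ B, p + t • v ∈ T) := by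
  obtain ⟨S', hSS, hS', hi', hX', hB⟩ : ∃ T : Set (ℝ × ℝ), S ⊆ T ∧ T.Countable ∧
      LinearIndepOn ℚ id T ∧ (∀ x ∈ T, x ∉ S → x ∉ X) ∧
      (v ≠ 0 → ¬ IsMeagre B → ∃ t ∈ B, p + t • v ∈ T) := by
    by_cases h : v ≠ 0 ∧ ¬ IsMeagre B
    · have hm := thin_union6 hX (thin_countable6 (span_countable6 hS)) p v h.1
      obtain ⟨t, htB, ht⟩ : ∃ t ∈ B, t ∉ {t : ℝ | p + t • v ∈ X ∪ Submodule.span ℚ S} := by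
        by_contra! hc
        exact h.2 (hm.mono hc)
      simp only [mem_ofPred_eq, mem_union, not_or] at ht
      refine ⟨insert (p + t • v) S, subset_insert _ _, hS.insert _, hi.id_insert ht.2, ?_,
        fun _ _ => ⟨t, htB, mem_insert _ _⟩⟩
      rintro x (rfl | hx) hxS
      · exact ht.1
      · exact absurd hx hxS
    · exact ⟨S, Subset.rfl, hS, hi, fun x h1 h2 => absurd h1 h2, fun h1 h2 => absurd ⟨h1, h2⟩ h⟩
  by_cases hp : p ∈ Submodule.span ℚ S'
  · exact ⟨S', hSS, hS', hi', hX', hp, hB⟩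
  have he : ((1, 0) : ℝ × ℝ) ≠ 0 := by simp
  have m1 := thin_union6 hX (thin_countable6 (span_countable6 (hS'.insert p))) 0 (1, 0) he
  have m2 := hX p (-(1, 0)) (neg_ne_zero.2 he)
  have hne : ¬ IsMeagre (univ : Set ℝ) := not_isMeagre_of_isOpen isOpen_univ univ_nonempty
  obtain ⟨t, ht⟩ : ∃ t : ℝ, t ∉ {t : ℝ | (0 : ℝ × ℝ) + t • (1, 0) ∈ X ∪ Submodule.span ℚ (insert p S')} ∪
      {t : ℝ | p + t • (-(1, 0)) ∈ X} := by
    by_contra! hc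
    exact hne ((m1.union m2).mono (fun t _ => hc t))
  simp only [mem_ofPred_eq, mem_union, not_or, zero_add, smul_neg, ← sub_eq_add_neg] at ht
  obtain ⟨⟨h1, h2⟩, h3⟩ := ht
  set a : ℝ × ℝ := t • (1, 0) with ha
  have ha' : a ∉ Submodule.span ℚ S' :=
    fun h => h2 (Submodule.span_mono (subset_insert _ _) h)
  have hb' : p - a ∉ Submodule.span ℚ (insert a S') := by
    intro h
    have : p ∈ Submodule.span ℚ (insert a S') := by
      have := add_mem h (Submodule.subset_span (mem_insert a S'))
      simpa using this
    exact h2 (mem_span_insert_exchange this hp)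
  refine ⟨insert (p - a) (insert a S'), ?_, (hS'.insert _).insert _,
    (hi'.id_insert ha').id_insert hb', ?_, ?_, ?_⟩
  · exact hSS.trans ((subset_insert _ _).trans (subset_insert _ _))
  · rintro x (rfl | rfl | hx) hxS
    · exact h3
    · exact h1
    · exact hX' x hx hxS
  · have := add_mem (Submodule.subset_span (R := ℚ) (mem_insert (p - a) (insert a S')))
      (Submodule.subset_span (mem_insert_of_mem (p - a) (mem_insert a S')))
    simpa using this
  · intro h1 h2
    obtain ⟨t, ht, h⟩ := hB h1 h2
    exact ⟨t, ht, mem_insert_of_mem _ (mem_insert_of_mem _ h)⟩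

theorem card_borel6 : #{B : Set ℝ // MeasurableSet B} ≤ 𝔠 := by
  have h := MeasurableSpace.cardinal_measurableSet_le_continuum
    (s := TopologicalSpace.countableBasis ℝ)
    ((mk_le_aleph0_iff.2 (TopologicalSpace.countable_countableBasis ℝ)).trans
      aleph0_le_continuum)
  rw [← (TopologicalSpace.isBasis_countableBasis ℝ).borel_eq_generateFrom,
    ← BorelSpace.measurable_eq (α := ℝ)] at h
  exact h

/-- Indices of the transfinite construction. -/
structure Idx6 where
  pt : ℝ × ℝ
  dir : ℝ × ℝ
  bs : {B : Set ℝ // MeasurableSet B}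

theorem stmt_6 (hCH : Cardinal.continuum = Cardinal.aleph 1) :
    ∃ A : Set (ℝ × ℝ),
      (∀ (p v : ℝ × ℝ), v ≠ 0 → IsStrongLuzin {t : ℝ | p + t • v ∈ A}) ∧
      LinearIndependent ℚ ((↑) : A → ℝ × ℝ) ∧
      Submodule.span ℚ A = ⊤ := by
  classical
  replace hCH : continuum.{0} = ℵ_ 1 := by
    apply lift_injective
    simpa using hCH
  let J := Idx6
  have hJ : #J ≤ ℵ₁ := by
    rw [← hCH]
    have : #J = (𝔠 * 𝔠) * ((𝔠 * 𝔠) * #{B : Set ℝ // MeasurableSet B}) := by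
      have e : Idx6 ≃ (ℝ × ℝ) × (ℝ × ℝ) × {B : Set ℝ // MeasurableSet B} :=
        ⟨fun j => (j.1, j.2, j.3), fun x => ⟨x.1, x.2.1, x.2.2⟩, fun _ => rfl, fun _ => rfl⟩
      rw [show #J = _ from mk_congr e]
      simp [-continuum_mul_self, -mk_eq_aleph0, mk_real]
    rw [this, continuum_mul_self]
    calc 𝔠 * (𝔠 * #{B : Set ℝ // MeasurableSet B}) ≤ 𝔠 * (𝔠 * 𝔠) := by
          gcongr; exact card_borel6
      _ = 𝔠 := by simp
  obtain ⟨_, _, hord⟩ := exists_ord_eq_type_lt J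
  have hseg : ∀ j : J, (Iio j).Countable := fun j => by
    rw [countable_iff_lt_aleph_one]
    exact (mk_Iio_lt j hord).trans_le hJ
  let bad : J → Set (ℝ × ℝ) := fun j =>
    if j.2 ≠ 0 ∧ IsMeagre j.3.1 then (fun t : ℝ => j.1 + t • j.2) '' j.3.1 else ∅
  have hbad : ∀ j, Thin6 (bad j) := by
    intro j
    by_cases h : j.2 ≠ 0 ∧ IsMeagre j.3.1
    · simp only [bad, if_pos h]
      exact thin_line6 _ _ h.1 _ h.2
    · simp only [bad, if_neg h]
      exact thin_countable6 countable_empty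
  have hbads : ∀ j, Thin6 (⋃ i ∈ Iio j, bad i) := by
    intro j p v hv
    have := isMeagre_biUnion (hseg j) (f := fun i => {t : ℝ | p + t • v ∈ bad i})
      (fun i _ => hbad i p v hv)
    refine this.mono ?_
    intro t ht
    simpa using ht
  have hstep : ∀ (j : J) (S : Set (ℝ × ℝ)), ∃ T : Set (ℝ × ℝ),
      S.Countable → LinearIndepOn ℚ id S → (S ⊆ T ∧ T.Countable ∧ LinearIndepOn ℚ id T ∧
      (∀ x ∈ T, x ∉ S → x ∉ ⋃ i ∈ Iio j, bad i) ∧ j.1 ∈ Submodule.span ℚ T ∧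
      (j.2 ≠ 0 → ¬ IsMeagre j.3.1 → ∃ t ∈ j.3.1, j.1 + t • j.2 ∈ T)) := by
    intro j S
    by_cases h : S.Countable ∧ LinearIndepOn ℚ id S
    · obtain ⟨T, hT⟩ := step6 j.1 j.2 j.3.1 _ S (hbads j) h.1 h.2
      exact ⟨T, fun _ _ => hT⟩
    · exact ⟨∅, fun h1 h2 => absurd ⟨h1, h2⟩ h⟩
  choose step hst using hstep
  let wf : WellFounded ((· < ·) : J → J → Prop) := wellFounded_lt
  let F : J → Set (ℝ × ℝ) := wf.fix (fun j f => step j (⋃ i : Iio j, f i.1 i.2))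
  have hF : ∀ j, F j = step j (⋃ i : Iio j, F i.1) := fun j => wf.fix_eq _ j
  have key : ∀ j, (F j).Countable ∧ LinearIndepOn ℚ id (F j) ∧ (∀ i < j, F i ⊆ F j) ∧
      (∀ x ∈ F j, x ∉ (⋃ i : Iio j, F i.1) → x ∉ ⋃ i ∈ Iio j, bad i) ∧
      j.1 ∈ Submodule.span ℚ (F j) ∧
      (j.2 ≠ 0 → ¬ IsMeagre j.3.1 → ∃ t ∈ j.3.1, j.1 + t • j.2 ∈ F j) := by
    intro j
    induction j using wf.induction with
    | _ j ih =>
      have hc : (⋃ i : Iio j, F i.1).Countable := by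
        have : Countable (Iio j) := hseg j
        exact countable_iUnion (fun i => (ih i.1 i.2).1)
      have hl : LinearIndepOn ℚ id (⋃ i : Iio j, F i.1) := by
        apply linearIndepOn_iUnion_of_directed
        · apply Monotone.directed_le
          intro a b hab
          rcases eq_or_lt_of_le hab with rfl | h
          · exact le_rfl
          · exact (ih b.1 b.2).2.2.1 a.1 h
        · exact fun i => (ih i.1 i.2).2.1
      obtain ⟨h1, h2, h3, h4, h5, h6⟩ := hst j _ hc hl
      rw [← hF j] at h1 h2 h3 h4 h5 h6
      exact ⟨h2, h3, fun i hij => (subset_iUnion (fun i : Iio j => F i.1) ⟨i, hij⟩).trans h1,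
        h4, h5, h6⟩
  have hmono : ∀ i j, i ≤ j → F i ⊆ F j := by
    intro i j hij
    rcases eq_or_lt_of_le hij with rfl | h
    · exact Subset.rfl
    · exact (key j).2.2.1 i h
  have hAbad : ∀ i, (⋃ j, F j) ∩ bad i ⊆ F i := by
    rintro i x ⟨hx, hxb⟩
    have hne : {j | x ∈ F j}.Nonempty := by simpa [Set.Nonempty] using hx
    let j := wf.min {j | x ∈ F j} hne
    have hj : x ∈ F j := wf.min_mem _ hne
    by_cases hij : i < j
    · exfalso
      refine (key j).2.2.2.1 x hj ?_ (mem_biUnion hij hxb)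
      intro h
      obtain ⟨k, hk⟩ := mem_iUnion.1 h
      exact wf.not_lt_min {j | x ∈ F j} hk k.2
    · exact hmono _ _ (not_lt.1 hij) hj
  refine ⟨⋃ j, F j, ?_, ?_, ?_⟩
  · intro p v hv
    have hmeet : ∀ B : Set ℝ, MeasurableSet B → ¬ IsMeagre B →
        ∃ t ∈ B, p + t • v ∈ ⋃ j, F j := by
      intro B hB hBm
      obtain ⟨t, ht, h⟩ := (key ⟨p, v, ⟨B, hB⟩⟩).2.2.2.2.2 hv hBm
      exact ⟨t, ht, mem_iUnion.2 ⟨_, h⟩⟩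
    have hstrong : ∀ B : Set ℝ, MeasurableSet B → ¬ IsMeagre B →
        ¬ ({t : ℝ | p + t • v ∈ ⋃ j, F j} ∩ B).Countable := by
      intro B hB hBm hc
      obtain ⟨t, ht, h⟩ := hmeet (B \ ({t : ℝ | p + t • v ∈ ⋃ j, F j} ∩ B))
        (hB.diff hc.measurableSet) (fun hm => hBm
          ((hm.union (countable_isMeagre6 hc)).mono (by
            intro x hx
            by_cases h : x ∈ {t : ℝ | p + t • v ∈ ⋃ j, F j} ∩ B
            · exact Or.inr h
            · exact Or.inl ⟨hx, h⟩)))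
      exact ht.2 ⟨h, ht.1⟩
    refine ⟨⟨le_antisymm ?_ ?_, ?_⟩, hstrong⟩
    · rw [← mk_real]; exact mk_set_le _
    · rw [hCH]
      by_contra hlt
      rw [not_le, ← countable_iff_lt_aleph_one] at hlt
      exact hstrong univ MeasurableSet.univ
        (not_isMeagre_of_isOpen isOpen_univ univ_nonempty) (hlt.mono inter_subset_left)
    · intro M hM
      obtain ⟨G, hG, hGd, hGD⟩ := mem_residual.1 hM
      have hm : IsMeagre Gᶜ := by
        rw [IsMeagre, compl_compl]
        exact mem_residual.2 ⟨G, Subset.rfl, hGd, hGD⟩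
      have hmeas : MeasurableSet Gᶜ := hGd.measurableSet.compl
      have hc := ((key ⟨p, v, ⟨Gᶜ, hmeas⟩⟩).1.mono (hAbad _)).preimage (line_inj6 p hv)
      refine hc.mono ?_
      rintro t ⟨ht, htM⟩
      refine ⟨ht, ?_⟩
      have hcond : v ≠ 0 ∧ IsMeagre Gᶜ := ⟨hv, hm⟩
      simp only [bad, if_pos hcond]
      exact ⟨t, fun h => hG h htM, rfl⟩
  · have : LinearIndepOn ℚ id (⋃ j, F j) := by
      apply linearIndepOn_iUnion_of_directed
      · exact Monotone.directed_le (fun i j h => hmono i j h)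
      · exact fun i => (key i).2.1
    exact this
  · rw [eq_top_iff]
    intro x _
    exact Submodule.span_mono (subset_iUnion F _)
      (key ⟨x, 0, ⟨∅, MeasurableSet.empty⟩⟩).2.2.2.2.1
end

section
/- Let f, g : ℝ → ℝ² be topological embeddings (continuous injective maps that are homeomorphisms onto their images), and let M ⊆ ℝ be a closed nowhere dense set. Then g⁻¹(f(M)) is a meager subset of ℝ (equivalently, g(ℝ) ∩ f(M) is meager in the subspace g(ℝ)). -/
open Cardinal MeasureTheory Set
open scoped Pointwise

theorem stmt_7 (f g : ℝ → ℝ × ℝ)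
    (hf : Topology.IsEmbedding f) (hg : Topology.IsEmbedding g)
    (M : Set ℝ) (hMc : IsClosed M) (hMnd : IsNowhereDense M) :
    IsMeagre (g ⁻¹' (f '' M)) := by 
  have hcover : g ⁻¹' (f '' M) = ⋃ n : ℕ, g ⁻¹' (f '' (M ∩ Icc (-(n:ℝ)) n)) := by
    rw [← preimage_iUnion, ← image_iUnion, ← inter_iUnion]
    have : (⋃ n : ℕ, Icc (-(n:ℝ)) n) = Set.univ := by
      refine eq_univ_of_forall fun x => ?_
      obtain ⟨n, hn⟩ := exists_nat_ge |x|
      exact mem_iUnion.2 ⟨n, abs_le.1 hn⟩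
    rw [this, inter_univ]
  rw [hcover]
  refine isMeagre_iUnion fun n => ?_
  have hcomp : IsCompact (M ∩ Icc (-(n:ℝ)) n) := isCompact_Icc.inter_left hMc
  have hcl : IsClosed (g ⁻¹' (f '' (M ∩ Icc (-(n:ℝ)) n))) :=
    (hcomp.image hf.continuous).isClosed.preimage hg.continuous
  refine IsNowhereDense.isMeagre ?_
  rw [hcl.isNowhereDense_iff, eq_empty_iff_forall_notMem]
  intro x hx
  obtain ⟨e, he, hball⟩ := Metric.isOpen_iff.1 isOpen_interior x hx
  have hsub : g '' (Metric.ball x e) ⊆ f '' M := by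
    rintro _ ⟨y, hy, rfl⟩
    have h1 := interior_subset (hball hy)
    exact image_mono inter_subset_left h1
  have himg : f '' (f ⁻¹' (g '' Metric.ball x e)) = g '' Metric.ball x e :=
    image_preimage_eq_of_subset (hsub.trans (image_subset_range f M))
  have hconn : IsPreconnected (f ⁻¹' (g '' Metric.ball x e)) := by
    rw [← hf.isInducing.isPreconnected_image, himg]
    exact (convex_ball x e).isPreconnected.image g hg.continuous.continuousOn
  have hSM : f ⁻¹' (g '' Metric.ball x e) ⊆ M := by
    intro t ht
    obtain ⟨m, hm, hmt⟩ := hsub ht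
    exact hf.injective hmt ▸ hm
  have hx0 : x ∈ Metric.ball x e := Metric.mem_ball_self he
  have hx1 : x + e / 2 ∈ Metric.ball x e := by
    rw [Metric.mem_ball, Real.dist_eq, abs_lt]
    constructor <;> linarith
  obtain ⟨a, -, ha⟩ := hsub (mem_image_of_mem g hx0)
  obtain ⟨b, -, hb⟩ := hsub (mem_image_of_mem g hx1)
  have haS : a ∈ f ⁻¹' (g '' Metric.ball x e) := ⟨x, hx0, ha.symm⟩
  have hbS : b ∈ f ⁻¹' (g '' Metric.ball x e) := ⟨_, hx1, hb.symm⟩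
  have hne : a ≠ b := by
    intro hab
    have h2 : x = x + e / 2 := hg.injective (by rw [← ha, ← hb, hab])
    linarith
  rw [hMc.isNowhereDense_iff] at hMnd
  have key : ∀ u v : ℝ, u ∈ f ⁻¹' (g '' Metric.ball x e) →
      v ∈ f ⁻¹' (g '' Metric.ball x e) → u < v → False := by
    intro u v hu hv huv
    have h3 : Ioo u v ⊆ interior M :=
      interior_maximal ((Ioo_subset_Icc_self.trans (hconn.Icc_subset hu hv)).trans hSM) isOpen_Ioo
    rw [hMnd] at h3
    obtain ⟨w, hw⟩ := exists_between huv
    exact h3 hw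
  rcases lt_or_gt_of_ne hne with h | h
  · exact key a b haS hbS h
  · exact key b a hbS haS h
end

section
/- Assume CH. Then there exists a set A ⊆ ℝ² such that for every topological embedding h : ℝ → ℝ² the preimage h⁻¹(A) is a strong Luzin set, and moreover A is a Hamel basis of ℝ² over ℚ. -/
open Cardinal MeasureTheory Set
open scoped Pointwise

abbrev PlaneTD (K : Set (ℝ × ℝ)) : Prop := IsCompact K ∧ IsTotallyDisconnected K

def SmallSet (Z : Set (ℝ × ℝ)) : Prop :=
  ∃ S : Set (Set (ℝ × ℝ)), S.Countable ∧ (∀ K ∈ S, PlaneTD K) ∧ Z ⊆ ⋃₀ S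

lemma SmallSet.of_td {K : Set (ℝ × ℝ)} (h : PlaneTD K) : SmallSet K :=
  ⟨{K}, countable_singleton _, by simpa using h, by simp⟩

lemma SmallSet.mono {Y Z : Set (ℝ × ℝ)} (h : SmallSet Z) (hY : Y ⊆ Z) : SmallSet Y := by
  obtain ⟨S, h1, h2, h3⟩ := h
  exact ⟨S, h1, h2, hY.trans h3⟩

lemma SmallSet.iUnion {ι : Type*} [Countable ι] {f : ι → Set (ℝ × ℝ)} (h : ∀ i, SmallSet (f i)) :
    SmallSet (⋃ i, f i) := by
  choose S h1 h2 h3 using h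
  refine ⟨⋃ i, S i, countable_iUnion h1, ?_, ?_⟩
  · intro K hK
    obtain ⟨i, hi⟩ := mem_iUnion.1 hK
    exact h2 i K hi
  · refine iUnion_subset fun i => (h3 i).trans ?_
    exact sUnion_subset_sUnion (subset_iUnion S i)

lemma SmallSet.of_countable {D : Set (ℝ × ℝ)} (h : D.Countable) : SmallSet D := by
  have := h.to_subtype
  refine (SmallSet.iUnion (fun x : D => SmallSet.of_td (K := {x.1}) ⟨isCompact_singleton, ?_⟩)).mono ?_
  · exact isTotallyDisconnected_singleton
  · intro x hx
    exact mem_iUnion.2 ⟨⟨x, hx⟩, rfl⟩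

lemma SmallSet.union {Y Z : Set (ℝ × ℝ)} (hY : SmallSet Y) (h : SmallSet Z) : SmallSet (Y ∪ Z) := by
  rw [union_eq_iUnion]
  refine SmallSet.iUnion ?_
  rintro (_ | _) <;> assumption

lemma SmallSet.sub {Z : Set (ℝ × ℝ)} (h : SmallSet Z) (v : ℝ × ℝ) :
    SmallSet ((fun x => v - x) ⁻¹' Z) := by
  obtain ⟨S, h1, h2, h3⟩ := h
  have he : Topology.IsEmbedding (fun x : ℝ × ℝ => v - x) := (Homeomorph.subLeft v).isEmbedding
  refine ⟨(fun K => (fun x => v - x) '' K) '' S, h1.image _, ?_, ?_⟩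
  · rintro _ ⟨K, hK, rfl⟩
    exact ⟨(h2 K hK).1.image he.continuous, he.isTotallyDisconnected_image.2 (h2 K hK).2⟩
  · intro x hx
    obtain ⟨K, hK, hxK⟩ := h3 hx
    exact ⟨_, ⟨K, hK, rfl⟩, v - x, hxK, by simp⟩

lemma td_preimage_nowhereDense {h : ℝ → ℝ × ℝ} (hh : Topology.IsEmbedding h) {K : Set (ℝ × ℝ)}
    (hK : PlaneTD K) : IsNowhereDense (h ⁻¹' K) := by
  have hc : IsClosed (h ⁻¹' K) := hK.1.isClosed.preimage hh.continuous
  rw [hc.isNowhereDense_iff]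
  by_contra hne
  obtain ⟨x, hx⟩ := nonempty_iff_ne_empty.2 hne
  obtain ⟨ε, hε, hb⟩ := Metric.isOpen_iff.1 isOpen_interior x hx
  rw [Real.ball_eq_Ioo] at hb
  have hp : IsPreconnected (h '' Ioo (x - ε) (x + ε)) :=
    isPreconnected_Ioo.image _ hh.continuous.continuousOn
  have hs := hK.2 _ (by rw [image_subset_iff]; exact hb.trans interior_subset) hp
  have := hs (mem_image_of_mem h (show x ∈ Ioo (x - ε) (x + ε) by constructor <;> linarith))
    (mem_image_of_mem h (show x + ε / 2 ∈ Ioo (x - ε) (x + ε) by constructor <;> linarith))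
  have := hh.injective this
  linarith

lemma small_preimage_meagre {h : ℝ → ℝ × ℝ} (hh : Topology.IsEmbedding h) {Z : Set (ℝ × ℝ)}
    (hZ : SmallSet Z) : IsMeagre (h ⁻¹' Z) := by
  obtain ⟨S, h1, h2, h3⟩ := hZ
  rw [isMeagre_iff_countable_union_isNowhereDense]
  refine ⟨(fun K => h ⁻¹' K) '' S, ?_, h1.image _, ?_⟩
  · rintro _ ⟨K, hK, rfl⟩
    exact td_preimage_nowhereDense hh (h2 K hK)
  · intro x hx
    obtain ⟨K, hK, hxK⟩ := h3 hx
    exact ⟨_, ⟨K, hK, rfl⟩, hxK⟩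

lemma td_of_nowhereDense {F : Set ℝ} (hF : interior F = ∅) : IsTotallyDisconnected F := by
  intro T hT hp x hx y hy
  by_contra hne
  wlog hlt : x < y generalizing x y
  · exact this hy hx (Ne.symm hne) (lt_of_le_of_ne (not_lt.1 hlt) (Ne.symm hne))
  have h1 : Ioo x y ⊆ F := Ioo_subset_Icc_self.trans ((hp.ordConnected.out hx hy).trans hT)
  have h2 : Ioo x y ⊆ interior F := interior_maximal h1 isOpen_Ioo
  rw [hF] at h2
  obtain ⟨z, hz⟩ := nonempty_Ioo.2 hlt
  exact h2 hz

lemma meagre_image_small {h : ℝ → ℝ × ℝ} (hh : Topology.IsEmbedding h) {M : Set ℝ}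
    (hM : IsMeagre M) : SmallSet (h '' M) := by
  obtain ⟨S, h1, h2, h3⟩ := isMeagre_iff_countable_union_isNowhereDense.1 hM
  have := h2.to_subtype
  refine (SmallSet.iUnion (fun p : S × ℕ =>
    SmallSet.of_td (K := h '' (closure p.1.1 ∩ Icc (-(p.2 : ℝ)) p.2)) ⟨?_, ?_⟩)).mono ?_
  · exact (isCompact_Icc.inter_left isClosed_closure).image hh.continuous
  · rw [hh.isTotallyDisconnected_image]
    apply td_of_nowhereDense
    exact subset_empty_iff.1 ((interior_mono inter_subset_left).trans (h1 _ p.1.2).subset)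
  · rintro _ ⟨x, hx, rfl⟩
    obtain ⟨K, hK, hxK⟩ := h3 hx
    obtain ⟨n, hn⟩ := exists_nat_ge |x|
    exact mem_iUnion.2 ⟨(⟨K, hK⟩, n), mem_image_of_mem h ⟨subset_closure hxK, abs_le.1 hn⟩⟩

lemma not_meagre_univ : ¬ IsMeagre (univ : Set ℝ) := not_isMeagre_of_isOpen isOpen_univ univ_nonempty

lemma not_small_univ : ¬ SmallSet univ := by
  intro hs
  have hh : Topology.IsEmbedding (fun x : ℝ => ((x, 0) : ℝ × ℝ)) :=
    isEmbedding_prodMkLeft 0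
  exact not_meagre_univ (by simpa using small_preimage_meagre hh hs)

lemma exists_avoid {P Z : Set (ℝ × ℝ)} (hP : ¬ SmallSet P) (hZ : SmallSet Z) :
    ∃ a ∈ P, a ∉ Z := by
  by_contra hc
  push Not at hc
  exact hP (hZ.mono hc)

lemma span_small {D : Set (ℝ × ℝ)} (h : D.Countable) :
    SmallSet (Submodule.span ℚ D : Set (ℝ × ℝ)) := by
  apply SmallSet.of_countable
  have := h.to_subtype
  have h2 : Countable (Submodule.span ℚ (range ((↑) : D → ℝ × ℝ))) := inferInstance
  rw [Subtype.range_coe] at h2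
  exact countable_coe_iff.1 h2

lemma step1 (D Z P : Set (ℝ × ℝ)) (hD : D.Countable) (hZ : SmallSet Z)
    (hli : LinearIndepOn ℚ id D) :
    ∃ F : Set (ℝ × ℝ), F.Countable ∧ Disjoint F Z ∧ LinearIndepOn ℚ id (D ∪ F) ∧
      (¬ SmallSet P → (F ∩ P).Nonempty) := by
  by_cases hP : SmallSet P
  · exact ⟨∅, countable_empty, empty_disjoint _, by simpa using hli, fun h => (h hP).elim⟩
  · obtain ⟨a, haP, ha⟩ := exists_avoid hP (hZ.union (span_small hD))
    rw [mem_union, not_or] at ha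
    refine ⟨{a}, countable_singleton _, by simpa using ha.1, ?_, fun _ => ⟨a, rfl, haP⟩⟩
    rw [union_singleton]
    exact hli.id_insert ha.2

lemma step2 (D Z : Set (ℝ × ℝ)) (v : ℝ × ℝ) (hD : D.Countable) (hZ : SmallSet Z)
    (hli : LinearIndepOn ℚ id D) :
    ∃ F : Set (ℝ × ℝ), F.Countable ∧ Disjoint F Z ∧ LinearIndepOn ℚ id (D ∪ F) ∧
      v ∈ Submodule.span ℚ (D ∪ F) := by
  by_cases hv : v ∈ Submodule.span ℚ D
  · exact ⟨∅, countable_empty, empty_disjoint _, by simpa using hli, by simpa using hv⟩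
  · obtain ⟨b, -, hb⟩ := exists_avoid not_small_univ
      ((hZ.union (hZ.sub v)).union (span_small (hD.insert v)))
    simp only [mem_union, not_or, mem_preimage, SetLike.mem_coe] at hb
    obtain ⟨⟨hb1, hb2⟩, hb3⟩ := hb
    have e : D ∪ {v - b, b} = insert (v - b) (insert b D) := by
      ext x; simp only [mem_union, mem_insert_iff, mem_singleton_iff]; tauto
    have hvb : v - b ∉ Submodule.span ℚ (insert b D) := by
      intro hc
      apply hb3
      apply mem_span_insert_exchange _ hv
      have := Submodule.add_mem _ hc (Submodule.subset_span (mem_insert b D))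
      simpa using this
    refine ⟨{v - b, b}, by simp, ?_, ?_, ?_⟩
    · rw [disjoint_left]
      rintro x (rfl | rfl)
      · exact hb2
      · exact hb1
    · rw [e]
      refine (hli.id_insert fun hc => hb3 ?_).id_insert hvb
      exact Submodule.span_mono (subset_insert _ _) hc
    · have := Submodule.add_mem (Submodule.span ℚ (D ∪ {v - b, b}))
        (Submodule.subset_span (show v - b ∈ D ∪ {v - b, b} by simp))
        (Submodule.subset_span (show b ∈ D ∪ {v - b, b} by simp))
      simpa using this

lemma step (D Z P : Set (ℝ × ℝ)) (v : ℝ × ℝ) :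
    ∃ F : Set (ℝ × ℝ), D.Countable → SmallSet Z → LinearIndepOn ℚ id D →
      F.Countable ∧ Disjoint F Z ∧ LinearIndepOn ℚ id (D ∪ F) ∧
      (¬ SmallSet P → (F ∩ P).Nonempty) ∧ v ∈ Submodule.span ℚ (D ∪ F) := by
  by_cases h : D.Countable ∧ SmallSet Z ∧ LinearIndepOn ℚ id D
  · obtain ⟨hD, hZ, hli⟩ := h
    obtain ⟨F1, a1, a2, a3, a4⟩ := step1 D Z P hD hZ hli
    obtain ⟨F2, b1, b2, b3, b4⟩ := step2 (D ∪ F1) Z v (hD.union a1) hZ a3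
    refine ⟨F1 ∪ F2, fun _ _ _ => ⟨a1.union b1, disjoint_union_left.2 ⟨a2, b2⟩, ?_, ?_, ?_⟩⟩
    · rwa [← union_assoc]
    · exact fun hP => (a4 hP).mono (inter_subset_inter_left _ subset_union_left)
    · rwa [← union_assoc]
  · exact ⟨∅, fun h1 h2 h3 => (h ⟨h1, h2, h3⟩).elim⟩

lemma recursion {ι : Type} [LinearOrder ι] [WellFoundedLT ι] [Nonempty ι]
    (hι : ∀ i : ι, (Iio i).Countable)
    (K P : ι → Set (ℝ × ℝ)) (v : ι → ℝ × ℝ) (hK : ∀ i, SmallSet (K i)) :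
    ∃ A : Set (ℝ × ℝ), LinearIndepOn ℚ id A ∧ (∀ i, v i ∈ Submodule.span ℚ A) ∧
      (∀ i, (A ∩ K i).Countable) ∧ ∀ i, ¬ SmallSet (P i) → (A ∩ P i).Nonempty := by
  choose f hf using step
  let F : ι → Set (ℝ × ℝ) := (wellFounded_lt (α := ι)).fix fun i ih =>
    f (⋃ j : Iio i, ih j.1 j.2) (⋃ j : Iio i, K j) (P i) (v i)
  let D : ι → Set (ℝ × ℝ) := fun i => ⋃ j : Iio i, F j
  have hF : ∀ i, F i = f (D i) (⋃ j : Iio i, K j) (P i) (v i) := fun i =>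
    WellFounded.fix_eq _ _ _
  have hZ : ∀ i, SmallSet (⋃ j : Iio i, K j) := fun i => by
    have := (hι i).to_subtype
    exact SmallSet.iUnion fun j => hK _
  have hsub : ∀ i j, i ≤ j → D i ∪ F i ⊆ D j ∪ F j := by
    intro i j hij
    rcases hij.eq_or_lt with rfl | hlt
    · exact subset_rfl
    · refine subset_union_of_subset_left (union_subset ?_ ?_) _
      · exact iUnion_subset fun k => subset_iUnion (fun k : Iio j => F k) ⟨k.1, k.2.trans hlt⟩
      · exact subset_iUnion (fun k : Iio j => F k) ⟨i, hlt⟩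
  have key : ∀ i, (D i).Countable ∧ LinearIndepOn ℚ id (D i) := by
    have key' : ∀ i, (F i).Countable ∧ LinearIndepOn ℚ id (D i ∪ F i) ∧
        ((D i).Countable ∧ LinearIndepOn ℚ id (D i)) := by
      intro i
      induction i using (wellFounded_lt (α := ι)).induction with
      | _ i ih =>
      have hDc : (D i).Countable := by
        have := (hι i).to_subtype
        exact countable_iUnion fun j => (ih j.1 j.2).1
      have hDl : LinearIndepOn ℚ id (D i) := by
        have e : D i = ⋃ j : Iio i, (D j ∪ F j) := by
          apply subset_antisymm
          · exact iUnion_mono fun j => subset_union_right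
          · refine iUnion_subset fun j => union_subset ?_ ?_
            · exact iUnion_subset fun k =>
                subset_iUnion (fun k : Iio i => F k) ⟨k.1, lt_trans k.2 j.2⟩
            · exact subset_iUnion (fun k : Iio i => F k) j
        rw [e]
        apply linearIndepOn_iUnion_of_directed
        · exact (show Monotone (fun j : Iio i => D j ∪ F j) from
            fun a b hab => hsub _ _ hab).directed_le
        · exact fun j => (ih j.1 j.2).2.1
      have := hf _ _ (P i) (v i) hDc (hZ i) hDl
      rw [← hF] at this
      exact ⟨this.1, this.2.2.1, hDc, hDl⟩
    exact fun i => (key' i).2.2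
  have main := fun i => hf _ _ (P i) (v i) (key i).1 (hZ i) (key i).2
  simp only [← hF] at main
  have hle : ∀ i, D i ∪ F i ⊆ ⋃ j, (D j ∪ F j) := subset_iUnion _
  refine ⟨⋃ i, (D i ∪ F i), ?_, ?_, ?_, ?_⟩
  · apply linearIndepOn_iUnion_of_directed
    · exact (show Monotone (fun j : ι => D j ∪ F j) from
            fun a b hab => hsub _ _ hab).directed_le
    · exact fun j => (main j).2.2.1
  · exact fun i => Submodule.span_mono (hle i) (main i).2.2.2.2
  · intro i
    refine ((key i).1.union (main i).1).mono ?_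
    rintro x ⟨hx, hxK⟩
    have hx' : ∃ j, x ∈ F j := by
      obtain ⟨j, hj | hj⟩ := mem_iUnion.1 hx
      · obtain ⟨k, hk⟩ := mem_iUnion.1 hj
        exact ⟨k, hk⟩
      · exact ⟨j, hj⟩
    obtain ⟨j, hj⟩ := hx'
    rcases le_or_gt j i with hji | hij
    · exact hsub j i hji (Or.inr hj)
    · exact (disjoint_left.1 (main j).2.1 hj (mem_iUnion.2 ⟨⟨i, hij⟩, hxK⟩)).elim
  · intro i hP
    refine ((main i).2.2.2.1 hP).mono (inter_subset_inter_left _ ?_)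
    exact subset_union_right.trans (hle i)

lemma ch_zero (hCH : Cardinal.continuum.{u} = Cardinal.aleph.{u} 1) :
    Cardinal.continuum.{0} = Cardinal.aleph.{0} 1 := by
  apply Cardinal.lift_injective.{u, 0}
  simpa using hCH

theorem stmt_8 (hCH : Cardinal.continuum = Cardinal.aleph 1) :
    ∃ A : Set (ℝ × ℝ),
      (∀ h : ℝ → ℝ × ℝ, Topology.IsEmbedding h → IsStrongLuzin (h ⁻¹' A)) ∧
      LinearIndependent ℚ ((↑) : A → ℝ × ℝ) ∧
      Submodule.span ℚ A = ⊤ := by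
  classical
  replace hCH := ch_zero hCH
  let ι : Type := (Cardinal.aleph.{0} 1).ord.ToType
  have hcard : #ι = 𝔠 := by rw [hCH]; exact Cardinal.mk_ord_toType _
  have hne : Nonempty ι := by
    rw [← Cardinal.mk_ne_zero_iff, hcard]; exact Cardinal.continuum_ne_zero
  have hι : ∀ i : ι, (Iio i).Countable := fun i => by
    rw [← Cardinal.le_aleph0_iff_set_countable, ← Cardinal.lt_aleph_one_iff]
    exact Cardinal.mk_Iio_toType_ord_lt i
  obtain ⟨v, hv⟩ : ∃ v : ι → ℝ × ℝ, Function.Surjective v := by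
    have : #(ℝ × ℝ) ≤ #ι := by simp [hcard, Cardinal.mk_real]
    obtain ⟨e⟩ := this
    exact ⟨_, Function.invFun_surjective e.injective⟩
  obtain ⟨P, hP⟩ : ∃ P : ι → {t : Set (ℝ × ℝ) | MeasurableSet t}, Function.Surjective P := by
    have h0 := MeasurableSpace.cardinal_measurableSet_le_continuum (α := ℝ × ℝ)
      (s := TopologicalSpace.countableBasis (ℝ × ℝ))
      ((Cardinal.le_aleph0_iff_set_countable.2 (TopologicalSpace.countable_countableBasis _)).trans
        Cardinal.aleph0_le_continuum)
    rw [← (TopologicalSpace.isBasis_countableBasis (ℝ × ℝ)).borel_eq_generateFrom,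
      ← BorelSpace.measurable_eq, ← hcard] at h0
    obtain ⟨e⟩ := h0
    have : Nonempty {t : Set (ℝ × ℝ) | MeasurableSet t} := ⟨⟨∅, show MeasurableSet (∅ : Set (ℝ × ℝ)) from MeasurableSet.empty⟩⟩
    exact ⟨_, Function.invFun_surjective e.injective⟩
  obtain ⟨A, hA1, hA2, hA3, hA4⟩ := recursion hι
    (fun i => if PlaneTD (P i).1 then (P i).1 else ∅) (fun i => (P i).1) v (by
      intro i
      split_ifs with h
      · exact SmallSet.of_td h
      · exact SmallSet.of_countable countable_empty)
  have hA5 : ∀ Z, SmallSet Z → (A ∩ Z).Countable := by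
    rintro Z ⟨S, h1, h2, h3⟩
    have : (⋃ K ∈ S, A ∩ K).Countable := by
      refine h1.biUnion fun K hK => ?_
      obtain ⟨i, hi⟩ := hP ⟨K, (h2 K hK).1.isClosed.measurableSet⟩
      have := hA3 i
      simp only [hi] at this
      rwa [if_pos (h2 K hK)] at this
    refine this.mono ?_
    rintro x ⟨hxA, hxZ⟩
    obtain ⟨K, hK, hxK⟩ := h3 hxZ
    exact mem_biUnion hK ⟨hxA, hxK⟩
  refine ⟨A, ?_, hA1, ?_⟩
  · intro h hh
    have hrange : MeasurableSet (range h) := by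
      have e : range h = ⋃ n : ℕ, h '' Icc (-(n : ℝ)) n := by
        rw [← image_iUnion, ← image_univ]
        congr 1
        symm
        rw [eq_univ_iff_forall]
        intro x
        obtain ⟨n, hn⟩ := exists_nat_ge |x|
        exact mem_iUnion.2 ⟨n, abs_le.1 hn⟩
      rw [e]
      exact MeasurableSet.iUnion fun n => (isCompact_Icc.image hh.continuous).isClosed.measurableSet
    have hme := hh.measurableEmbedding hrange
    have strong : ∀ B : Set ℝ, MeasurableSet B → ¬ IsMeagre B → ¬ (h ⁻¹' A ∩ B).Countable := by
      intro B hB hBm hc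
      have hnm : ¬ SmallSet (h '' (B \ (h ⁻¹' A ∩ B))) := by
        intro hs
        apply hBm
        have h1 := small_preimage_meagre hh hs
        rw [preimage_image_eq _ hh.injective] at h1
        have h2 := small_preimage_meagre hh (SmallSet.of_countable (hc.image h))
        rw [preimage_image_eq _ hh.injective] at h2
        refine (h1.union h2).mono ?_
        intro x hx
        by_cases hx' : x ∈ h ⁻¹' A ∩ B
        · exact Or.inr hx'
        · exact Or.inl ⟨hx, hx'⟩
      obtain ⟨i, hi⟩ := hP ⟨_, hme.measurableSet_image.2 (hB.diff hc.measurableSet)⟩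
      have := hA4 i
      rw [hi] at this
      obtain ⟨_, hyA, x, hx, rfl⟩ := this hnm
      exact hx.2 ⟨hyA, hx.1⟩
    refine ⟨⟨?_, ?_⟩, strong⟩
    · apply le_antisymm
      · exact (Cardinal.mk_set_le _).trans Cardinal.mk_real.le
      · rw [hCH]
        by_contra hlt
        rw [not_le, Cardinal.lt_aleph_one_iff, Cardinal.le_aleph0_iff_set_countable] at hlt
        exact strong univ MeasurableSet.univ not_meagre_univ (by simpa using hlt)
    · intro M hM
      have h1 := hA5 _ (meagre_image_small hh hM)
      refine (h1.preimage hh.injective).mono ?_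
      rintro x ⟨hxA, hxM⟩
      exact ⟨hxA, mem_image_of_mem h hxM⟩
  · rw [eq_top_iff]
    rintro x -
    obtain ⟨i, rfl⟩ := hv x
    exact hA2 i
end

section
/- Assume that a Sierpiński set exists. Then there exists a set A ⊆ ℝ² such that for every point p ∈ ℝ² and every vector v ∈ ℝ² with ‖v‖ = 1, the set {t ∈ ℝ : p + t·v ∈ A} is a strong Sierpiński set (i.e., the intersection of A with every straight line is a strong Sierpiński set under the unit-speed parametrization of the line). -/
open Cardinal MeasureTheory Set
open scoped Pointwise

theorem aux_density (B C : Set ℝ) (hC : MeasurableSet C)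
    (hB0 : volume B ≠ 0) (hC0 : volume C ≠ 0) : ∃ q : ℚ, ∃ b ∈ B, b + (q : ℝ) ∈ C := by
  have key : ∀ s : Set ℝ, volume s ≠ 0 → ∃ x, ∀ᶠ r in nhdsWithin (0:ℝ) (Ioi 0),
      ENNReal.ofReal (3/2 * r) < volume (s ∩ Metric.closedBall x r) := by
    intro s hs
    have h := Besicovitch.ae_tendsto_measure_inter_div (volume : Measure ℝ) s
    have hne : (ae (volume.restrict s)).NeBot := by
      rw [ae_neBot]; simpa [Measure.restrict_eq_zero] using hs
    obtain ⟨x, hx⟩ := h.exists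
    refine ⟨x, ?_⟩
    have h34 : (ENNReal.ofReal (3/4)) < 1 := by
      rw [ENNReal.ofReal_lt_one]; norm_num
    filter_upwards [hx.eventually (lt_mem_nhds h34), self_mem_nhdsWithin] with r hr hr0
    have hr0 : 0 < r := hr0
    rw [Real.volume_closedBall, ENNReal.lt_div_iff_mul_lt (by left; simp [hr0]) (by left; exact ENNReal.ofReal_ne_top),
      ← ENNReal.ofReal_mul (by norm_num)] at hr
    convert hr using 2
    ring
  obtain ⟨b, hb⟩ := key B hB0
  obtain ⟨c, hc⟩ := key C hC0
  obtain ⟨r, ⟨hb, hc⟩, hr0⟩ := ((hb.and hc).and self_mem_nhdsWithin).exists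
  have hr0 : 0 < r := hr0
  obtain ⟨q, hq1, hq2⟩ := exists_rat_btwn (show c - b - r/4 < c - b + r / 4 by linarith)
  refine ⟨q, ?_⟩
  by_contra! hcon
  set X := (fun x : ℝ => x + (-(q:ℝ))) ⁻¹' (B ∩ Metric.closedBall b r) with hX
  set Y := C ∩ Metric.closedBall c r with hY
  have hXv : volume X = volume (B ∩ Metric.closedBall b r) := measure_preimage_add_right _ _ _
  have hdis : Disjoint X Y := by
    rw [Set.disjoint_left]
    rintro x ⟨hx, -⟩ ⟨hx', -⟩
    have := hcon _ hx
    simp at this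
    exact this hx'
  have hu : volume (X ∪ Y) = volume X + volume Y :=
    measure_union hdis (hC.inter Metric.isClosed_closedBall.measurableSet)
  have hsub : X ∪ Y ⊆ Metric.closedBall c (5/4 * r) := by
    rintro x (⟨-, hx⟩ | ⟨-, hx⟩)
    · rw [Real.closedBall_eq_Icc] at hx ⊢
      obtain ⟨h1, h2⟩ := hx
      constructor <;> linarith
    · rw [Real.closedBall_eq_Icc] at hx ⊢
      obtain ⟨h1, h2⟩ := hx
      constructor <;> linarith
  have h1 := measure_mono (μ := volume) hsub
  rw [hu, hXv, Real.volume_closedBall] at h1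
  have h2 := (ENNReal.add_lt_add hb hc).trans_le h1
  rw [← ENNReal.ofReal_add (by positivity) (by positivity),
    ENNReal.ofReal_lt_ofReal_iff (by positivity)] at h2
  linarith

theorem aux_strong_s9 (hS : ∃ S : Set ℝ, IsSierpinski S) :
    ∃ S : Set ℝ, IsStrongSierpinski S ∧ ∀ d : ℝ, #(S ∩ Ioi d : Set ℝ) = Cardinal.continuum := by
  obtain ⟨S, hS1, hS2⟩ := hS
  set T : Set ℝ := ⋃ q : ℚ, (fun x : ℝ => x + q) '' S with hT
  have hTinv : ∀ (x : ℝ) (q : ℚ), x ∈ T → x + q ∈ T := by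
    intro x q hx
    rw [hT, mem_iUnion] at hx ⊢
    obtain ⟨r, y, hy, rfl⟩ := hx
    exact ⟨r + q, y, hy, by push_cast; ring⟩
  have hST : S ⊆ T := fun x hx => mem_iUnion.2 ⟨0, x, hx, by simp⟩
  have hle : ∀ U : Set ℝ, #U ≤ Cardinal.continuum := fun U => by
    rw [← Cardinal.mk_real]; exact Cardinal.mk_set_le U
  have hTc : #T = Cardinal.continuum := le_antisymm (hle _) (hS1 ▸ Cardinal.mk_le_mk_of_subset hST)
  have hTN : ∀ N : Set ℝ, volume N = 0 → (T ∩ N).Countable := by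
    intro N hN
    rw [hT, iUnion_inter]
    refine countable_iUnion fun q => ?_
    have h0 : volume ((fun x : ℝ => x + q) ⁻¹' N) = 0 := by
      rw [measure_preimage_add_right]; exact hN
    refine ((hS2 _ h0).image (fun x : ℝ => x + q)).mono ?_
    rintro _ ⟨⟨x, hx, rfl⟩, hx'⟩
    exact ⟨x, ⟨hx, hx'⟩, rfl⟩
  have hTunc : ¬ T.Countable := by
    intro h
    have := h.le_aleph0
    rw [hTc] at this
    exact absurd this (not_le.2 Cardinal.aleph0_lt_continuum)
  refine ⟨T, ⟨⟨hTc, hTN⟩, ?_⟩, ?_⟩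
  · intro B hB hB0 hcount
    set D : Set ℝ := ⋃ q : ℚ, (fun x : ℝ => x + q) ⁻¹' B with hD
    have hDm : MeasurableSet D := MeasurableSet.iUnion fun q => (measurable_add_const _) hB
    have hDc : volume Dᶜ = 0 := by
      by_contra hne
      obtain ⟨q, b, hb, hbq⟩ := aux_density B Dᶜ hDm.compl hB0.ne' hne
      apply hbq
      exact mem_iUnion.2 ⟨-q, by simpa using hb⟩
    apply hTunc
    have h1 := hTN _ hDc
    have h2 : (T ∩ D).Countable := by
      rw [hD, inter_iUnion]
      refine countable_iUnion fun q => ?_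
      refine (hcount.image (fun x : ℝ => x + -(q:ℝ))).mono ?_
      rintro x ⟨hx, hx'⟩
      exact ⟨x + q, ⟨hTinv _ _ hx, hx'⟩, by simp⟩
    refine (h2.union h1).mono fun x hx => ?_
    by_cases h : x ∈ D
    · exact Or.inl ⟨hx, h⟩
    · exact Or.inr ⟨hx, h⟩
  · intro d
    refine le_antisymm (hle _) ?_
    by_contra hlt
    rw [not_le] at hlt
    have hcov : T ⊆ ⋃ n : ℕ, (fun x : ℝ => x - n) '' (T ∩ Ioi d) := by
      intro x hx
      obtain ⟨n, hn⟩ := exists_nat_gt (d - x)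
      refine mem_iUnion.2 ⟨n, x + n, ⟨by simpa using hTinv x n hx, ?_⟩, by simp⟩
      show d < x + n
      linarith
    have h1 : #T ≤ Cardinal.aleph0 * #(T ∩ Ioi d : Set ℝ) := by
      refine (Cardinal.mk_le_mk_of_subset hcov).trans ?_
      refine (Cardinal.mk_iUnion_le _).trans ?_
      rw [Cardinal.mk_nat]
      gcongr
      exact ciSup_le' fun n => Cardinal.mk_image_le
    rw [hTc] at h1
    exact absurd h1 (not_le.2 (Cardinal.mul_lt_of_lt Cardinal.aleph0_le_continuum
      Cardinal.aleph0_lt_continuum hlt))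

theorem aux_line (S : Set ℝ) (hS : IsStrongSierpinski S)
    (hd : ∀ d : ℝ, #(S ∩ Ioi d : Set ℝ) = Cardinal.continuum) (c e : ℝ) (he : 0 ≤ e) :
    IsStrongSierpinski {t : ℝ | √((t + c) ^ 2 + e) ∈ S} := by
  obtain ⟨⟨hS1, hS2⟩, hS3⟩ := hS
  set g : ℝ → ℝ := fun t => √((t + c) ^ 2 + e) with hg
  set h : ℝ → ℝ → ℝ := fun σ s => -c + σ * √(s ^ 2 - e) with hh
  have hcov : ∀ t, t = h 1 (g t) ∨ t = h (-1) (g t) := by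
    intro t
    have : (g t) ^ 2 - e = (t + c) ^ 2 := by
      rw [hg]; dsimp only; rw [Real.sq_sqrt (by positivity)]; ring
    simp only [hh, this, Real.sqrt_sq_eq_abs]
    rcases abs_cases (t + c) with ⟨h1, -⟩ | ⟨h1, -⟩ <;> rw [h1]
    · left; ring
    · right; ring
  have hgpos : ∀ t, t ≠ -c → √e < g t := by
    intro t ht
    apply Real.sqrt_lt_sqrt he
    have : t + c ≠ 0 := fun h' => ht (by linarith)
    have := sq_pos_of_ne_zero this
    linarith
  have hsq : ∀ s, √e < s → 0 < s ^ 2 - e := by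
    intro s hs
    have := Real.lt_sq_of_sqrt_lt hs
    linarith
  have hgh : ∀ σ : ℝ, σ ^ 2 = 1 → ∀ s, √e < s → g (h σ s) = s := by
    intro σ hσ s hs
    have hs0 : 0 ≤ s := (Real.sqrt_nonneg _).trans hs.le
    simp only [hg, hh]
    have : (-c + σ * √(s ^ 2 - e) + c) ^ 2 + e = s ^ 2 := by
      have h1 : (-c + σ * √(s ^ 2 - e) + c) ^ 2 = σ ^ 2 * (√(s ^ 2 - e)) ^ 2 := by ring
      rw [h1, hσ, Real.sq_sqrt (hsq s hs).le]; ring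
    rw [this, Real.sqrt_sq hs0]
  refine ⟨⟨le_antisymm (by rw [← Cardinal.mk_real]; exact Cardinal.mk_set_le _) ?_, ?_⟩, ?_⟩
  · rw [← hd (√e)]
    refine Cardinal.mk_le_of_injective (f := fun s => ⟨h 1 s.1, ?_⟩) ?_
    · show g (h 1 s.1) ∈ S
      rw [hgh 1 (by norm_num) _ s.2.2]; exact s.2.1
    · intro s s' hss
      have h1 : h 1 s.1 = h 1 s'.1 := congrArg Subtype.val hss
      have := congrArg g h1
      rw [hgh 1 (by norm_num) _ s.2.2, hgh 1 (by norm_num) _ s'.2.2] at this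
      exact Subtype.ext this
  · intro N hN
    set N' := N \ {-c}
    have hN' : volume N' = 0 := measure_mono_null sdiff_subset hN
    have hgN : volume (g '' N') = 0 := by
      apply addHaar_image_eq_zero_of_differentiableOn_of_addHaar_eq_zero _ _ hN'
      intro t ht
      apply DifferentiableAt.differentiableWithinAt
      have : (t + c) ≠ 0 := fun h' => ht.2 (by simp; linarith)
      have hp : (t + c) ^ 2 + e ≠ 0 := by positivity
      exact DifferentiableAt.sqrt (by fun_prop) hp
    have hc := hS2 _ hgN
    refine (((hc.image (h 1)).union (hc.image (h (-1)))).union (countable_singleton (-c))).mono ?_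
    rintro t ⟨htS, htN⟩
    by_cases htc : t = -c
    · exact Or.inr htc
    left
    have hm : g t ∈ S ∩ g '' N' := ⟨htS, t, ⟨htN, htc⟩, rfl⟩
    rcases hcov t with ht | ht
    · left; exact ⟨_, hm, ht.symm⟩
    · right; exact ⟨_, hm, ht.symm⟩
  · intro B hB hB0 hcount
    have key : ∀ σ : ℝ, σ ^ 2 = 1 → volume (h σ '' (h σ ⁻¹' B ∩ Ioi (√e))) = 0 := by
      intro σ hσ
      apply addHaar_image_eq_zero_of_differentiableOn_of_addHaar_eq_zero
      · intro s hs
        apply DifferentiableAt.differentiableWithinAt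
        have h1 : DifferentiableAt ℝ (fun s : ℝ => √(s ^ 2 - e)) s :=
          DifferentiableAt.sqrt (by fun_prop) (hsq s hs.2).ne'
        exact (h1.const_mul σ).const_add (-c)
      · by_contra hne
        have hm : Measurable (h σ) := by simp only [hh]; fun_prop
        refine hS3 (h σ ⁻¹' B ∩ Ioi (√e)) ((hm hB).inter measurableSet_Ioi)
          (pos_iff_ne_zero.2 hne) ?_
        refine (hcount.image g).mono ?_
        rintro s ⟨hsS, hsB, hs⟩
        refine ⟨h σ s, ⟨?_, hsB⟩, hgh σ hσ s hs⟩
        show g (h σ s) ∈ S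
        rw [hgh σ hσ s hs]; exact hsS
    have h1 := key 1 (by norm_num)
    have h2 := key (-1) (by norm_num)
    refine hB0.ne' (measure_mono_null (t := (h 1 '' (h 1 ⁻¹' B ∩ Ioi (√e)) ∪
      h (-1) '' (h (-1) ⁻¹' B ∩ Ioi (√e))) ∪ {-c}) ?_ ?_)
    · intro t ht
      by_cases htc : t = -c
      · exact Or.inr htc
      left
      rcases hcov t with h' | h'
      · left; exact ⟨g t, ⟨by rw [mem_preimage, ← h']; exact ht, hgpos t htc⟩, h'.symm⟩
      · right; exact ⟨g t, ⟨by rw [mem_preimage, ← h']; exact ht, hgpos t htc⟩, h'.symm⟩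
    · exact measure_union_null (measure_union_null h1 h2) (by simp)

theorem stmt_9 (hS : ∃ S : Set ℝ, IsSierpinski S) :
    ∃ A : Set (EuclideanSpace ℝ (Fin 2)),
      ∀ (p v : EuclideanSpace ℝ (Fin 2)), ‖v‖ = 1 →
        IsStrongSierpinski {t : ℝ | p + t • v ∈ A} := by
  obtain ⟨S, hS, hd⟩ := aux_strong_s9 hS
  refine ⟨{x | ‖x‖ ∈ S}, fun p v hv => ?_⟩
  have he : 0 ≤ ‖p‖ ^ 2 - (inner ℝ p v) ^ 2 := by
    have h1 := abs_real_inner_le_norm p v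
    rw [hv, mul_one] at h1
    have := sq_le_sq' (by linarith [neg_abs_le (inner ℝ p v : ℝ)]) ((le_abs_self _).trans h1)
    linarith
  have := aux_line S hS hd (inner ℝ p v) _ he
  have hn : ∀ t : ℝ, ‖p + t • v‖ =
      √((t + inner ℝ p v) ^ 2 + (‖p‖ ^ 2 - (inner ℝ p v) ^ 2)) := by
    intro t
    rw [← Real.sqrt_sq (norm_nonneg (p + t • v)), norm_add_sq_real, inner_smul_right, norm_smul, hv]
    congr 1
    rw [mul_one, Real.norm_eq_abs, sq_abs]
    ring
  simp only [← hn] at this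
  exact this
end

section
/- Assume CH. Let I be a σ-ideal on ℝ satisfying the standing assumptions (ℝ ∉ I, translation invariance, scale invariance, Borel base, Steinhaus property). Then there exists an I-Luzin set L ⊆ ℝ such that the Minkowski sum L + L is also an I-Luzin set. -/
open Cardinal MeasureTheory Set
open scoped Pointwise

theorem luzin_step (I : Set (Set ℝ)) (hI : StandingIdeal I) (C : Set ℝ) (T : Set (Set ℝ))
    (hC : C.Countable) (hT : T.Countable) (hTI : T ⊆ I) :
    ∃ z : ℝ, z ∉ C ∧ ∀ S ∈ T, z ∉ S ∧ z + z ∉ S ∧ ∀ c ∈ C, z + c ∉ S := by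
  obtain ⟨⟨hemp, hsub, hun⟩, huniv, htr, hsc, -, hst⟩ := hI
  have hcun : ∀ F : Set (Set ℝ), F.Countable → F ⊆ I → ⋃₀ F ∈ I := by
    intro F hF hFI
    rcases F.eq_empty_or_nonempty with rfl | hne
    · simpa using hemp
    · obtain ⟨f, rfl⟩ := hF.exists_eq_range hne
      rw [sUnion_range]
      exact hun f fun n => hFI ⟨n, rfl⟩
  have h0 : ({0} : Set ℝ) ∈ I := by
    by_contra h
    have := hst {0} {0} (measurableSet_singleton 0) (measurableSet_singleton 0) h h
    simp at this
  have hsing : ∀ c : ℝ, ({c} : Set ℝ) ∈ I := by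
    intro c
    simpa using htr c _ h0
  let F : Set (Set ℝ) := ((fun c => ({c} : Set ℝ)) '' C) ∪ T ∪
    ((fun S => (fun y => (1/2 : ℝ) * y) '' S) '' T) ∪
    (Set.image2 (fun c S => (fun y => -c + y) '' S) C T)
  have hF : ⋃₀ F ∈ I := by
    apply hcun
    · exact (((hC.image _).union hT).union (hT.image _)).union (hC.image2 hT _)
    · rintro S (((⟨c, -, rfl⟩ | h) | ⟨S, h, rfl⟩) | ⟨c, -, S, h, rfl⟩)
      · exact hsing c
      · exact hTI h
      · exact hsc _ _ (hTI h)
      · exact htr _ _ (hTI h)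
  have : ∃ z, z ∉ ⋃₀ F := by
    by_contra! h
    exact huniv (by rwa [← eq_univ_of_forall h])
  obtain ⟨z, hz⟩ := this
  refine ⟨z, fun h => hz ⟨{z}, Or.inl (Or.inl (Or.inl ⟨z, h, rfl⟩)), rfl⟩, fun S hS =>
    ⟨fun h => hz ⟨S, Or.inl (Or.inl (Or.inr hS)), h⟩, fun h => hz ⟨_, Or.inl (Or.inr ⟨S, hS, rfl⟩),
      ⟨z + z, h, by ring⟩⟩, fun c hc h => hz ⟨_, Or.inr ⟨c, hc, S, hS, rfl⟩, ⟨z + c, h, by ring⟩⟩⟩⟩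

theorem exists_enum (I : Set (Set ℝ)) (hI : StandingIdeal I) :
    ∃ B : ℝ → Set ℝ, (∀ x, B x ∈ I) ∧ ∀ S ∈ I, ∃ x, S ⊆ B x := by
  obtain ⟨⟨hemp, hsub, hun⟩, huniv, htr, hsc, hb, hst⟩ := hI
  let M : Set (Set ℝ) := {s | MeasurableSet s ∧ s ∈ I}
  have hM : #M ≤ #ℝ := by
    rw [Cardinal.mk_real]
    refine (Cardinal.mk_le_mk_of_subset (t := {s | MeasurableSet s}) fun s h => h.1).trans ?_
    obtain ⟨b, hbc, hbe⟩ := MeasurableSpace.CountablyGenerated.isCountablyGenerated (α := ℝ)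
    rw [hbe]
    exact MeasurableSpace.cardinal_measurableSet_le_continuum
      ((Cardinal.le_aleph0_iff_set_countable.2 hbc).trans Cardinal.aleph0_le_continuum)
  have hne : Nonempty M := ⟨⟨∅, MeasurableSet.empty, hemp⟩⟩
  obtain ⟨e⟩ := hM
  have hs := Function.invFun_surjective e.injective
  refine ⟨fun x => (Function.invFun e x : M).1, fun x => (Function.invFun e x : M).2.2, ?_⟩
  intro S hS
  obtain ⟨B, hB, hm, hSB⟩ := hb S hS
  obtain ⟨x, hx⟩ := hs ⟨B, hm, hB⟩
  exact ⟨x, by simpa [hx] using hSB⟩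

theorem stmt_11 (hCH : Cardinal.continuum = Cardinal.aleph 1)
    (I : Set (Set ℝ)) (hI : StandingIdeal I) :
    ∃ L : Set ℝ, IsLuzinFor I L ∧ IsLuzinFor I (L + L) := by 
  classical
  have hCH0 : Cardinal.continuum.{0} = Cardinal.aleph.{0} 1 := by
    apply Cardinal.lift_injective
    rw [Cardinal.lift_continuum, Cardinal.lift_aleph, Ordinal.lift_one]
    exact hCH
  obtain ⟨B, hBI, hB⟩ := exists_enum I hI
  obtain ⟨r, wo, hr⟩ := Cardinal.exists_ord_eq ℝ
  have hseg : ∀ x, {y | r y x}.Countable := by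
    intro x
    have h1 := Cardinal.card_typein_lt x hr
    rw [Cardinal.mk_real, hCH0, ← Cardinal.succ_aleph0, Order.lt_succ_iff] at h1
    exact Cardinal.le_aleph0_iff_set_countable.1 h1
  have hseg' : ∀ x, {y | r y x ∨ y = x}.Countable := fun x =>
    (hseg x).union (countable_singleton x)
  choose! G hG using luzin_step I hI
  let ℓ : ℝ → ℝ := wo.wf.fix fun x prev =>
    G (Set.range fun y : {y // r y x} => prev y.1 y.2) (B '' {y | r y x ∨ y = x})
  have hℓ : ∀ x, ℓ x = G (ℓ '' {y | r y x}) (B '' {y | r y x ∨ y = x}) := by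
    intro x
    have : ℓ x = G (Set.range fun y : {y // r y x} => ℓ y.1) (B '' {y | r y x ∨ y = x}) :=
      wo.wf.fix_eq _ x
    rw [this, Set.image_eq_range ℓ]
    rfl
  have key : ∀ x, ℓ x ∉ ℓ '' {y | r y x} ∧ ∀ S ∈ B '' {y | r y x ∨ y = x},
      ℓ x ∉ S ∧ ℓ x + ℓ x ∉ S ∧ ∀ c ∈ ℓ '' {y | r y x}, ℓ x + c ∉ S := by
    intro x
    have := hG (ℓ '' {y | r y x}) (B '' {y | r y x ∨ y = x}) ((hseg x).image _)
      ((hseg' x).image _) (by rintro _ ⟨y, -, rfl⟩; exact hBI y)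
    rwa [← hℓ x] at this
  have tri : ∀ x y, r x y ∨ x = y ∨ r y x := fun x y => trichotomous_of r x y
  have hinj : Function.Injective ℓ := by
    intro x y h
    rcases tri x y with h1 | h1 | h1
    · exact absurd ⟨x, h1, h⟩ (key y).1
    · exact h1
    · exact absurd ⟨y, h1, h.symm⟩ (key x).1
  have hcard : #(Set.range ℓ) = 𝔠 := by
    rw [Cardinal.mk_range_eq _ hinj, Cardinal.mk_real]
  have hle : ∀ s : Set ℝ, #s ≤ 𝔠 := fun s => (Cardinal.mk_set_le s).trans Cardinal.mk_real.le
  refine ⟨Set.range ℓ, ⟨hcard, ?_⟩, le_antisymm (hle _) ?_, ?_⟩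
  · intro S hS
    obtain ⟨b, hb⟩ := hB S hS
    refine ((hseg b).image ℓ).mono ?_
    rintro _ ⟨⟨x, rfl⟩, hx⟩
    refine ⟨x, ?_, rfl⟩
    by_contra h
    refine ((key x).2 (B b) ⟨b, ?_, rfl⟩).1 (hb hx)
    rcases tri x b with h1 | h1 | h1
    · exact absurd h1 h
    · exact Or.inr h1.symm
    · exact Or.inl h1
  · have hi : Function.Injective (fun x => ℓ 0 + ℓ x) := fun x y h => hinj (add_left_cancel h)
    rw [← Cardinal.mk_real, ← Cardinal.mk_range_eq _ hi]
    apply Cardinal.mk_le_mk_of_subset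
    rintro _ ⟨x, rfl⟩
    exact Set.add_mem_add ⟨0, rfl⟩ ⟨x, rfl⟩
  · intro S hS
    obtain ⟨b, hb⟩ := hB S hS
    refine ((hseg b).image2 (hseg b) (fun x y => ℓ x + ℓ y)).mono ?_
    have main : ∀ x y, (r y x ∨ y = x) → ℓ x + ℓ y ∈ S → r x b ∧ r y b := by
      intro x y hyx hxy
      have hxb : r x b := by
        by_contra h
        have h2 : r b x ∨ b = x := by
          rcases tri x b with h1 | h1 | h1
          · exact absurd h1 h
          · exact Or.inr h1.symm
          · exact Or.inl h1
        have k := (key x).2 (B b) ⟨b, h2, rfl⟩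
        rcases hyx with h3 | rfl
        · exact k.2.2 _ ⟨y, h3, rfl⟩ (hb hxy)
        · exact k.2.1 (hb hxy)
      refine ⟨hxb, ?_⟩
      rcases hyx with h3 | rfl
      · exact _root_.trans h3 hxb
      · exact hxb
    rintro _ ⟨⟨_, ⟨x, rfl⟩, _, ⟨y, rfl⟩, rfl⟩, hx⟩
    rcases tri x y with h1 | h1 | h1
    · have := main y x (Or.inl h1) (by simpa [add_comm] using hx)
      exact ⟨x, this.2, y, this.1, rfl⟩
    · have := main x y (Or.inr h1.symm) hx
      exact ⟨x, this.1, y, this.2, rfl⟩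
    · have := main x y (Or.inl h1) hx
      exact ⟨x, this.1, y, this.2, rfl⟩
end

section
/- Assume CH. Let I be a σ-ideal on ℝ satisfying the standing assumptions (ℝ ∉ I, translation invariance, scale invariance, Borel base, Steinhaus property). Then there exists an I-Luzin set L ⊆ ℝ such that L + L = ℝ. -/
open Cardinal MeasureTheory Set
open scoped Pointwise

theorem stmt_12 (hCH : Cardinal.continuum = Cardinal.aleph 1)
    (I : Set (Set ℝ)) (hI : StandingIdeal I) :
    ∃ L : Set ℝ, IsLuzinFor I L ∧ L + L = Set.univ := by
  have hCH0 : Cardinal.continuum.{0} = Cardinal.aleph.{0} 1 := by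
    apply Cardinal.lift_injective
    rw [Cardinal.lift_continuum, Cardinal.lift_aleph, Ordinal.lift_one]
    exact hCH
  obtain ⟨⟨h0, hsub, hU⟩, huniv, htr, hsc, hB, hSt⟩ := hI
  obtain ⟨r, wo, hr⟩ := Cardinal.exists_ord_eq ℝ
  have hseg : ∀ y : ℝ, {x | r x y}.Countable := by
    intro y
    have h1 : #{x // r x y} < #ℝ := by
      rw [← Ordinal.card_typein (r := r)]
      exact Cardinal.card_typein_lt y hr
    rw [Cardinal.mk_real, hCH0, ← Cardinal.succ_aleph0, Order.lt_succ_iff] at h1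
    exact Cardinal.le_aleph0_iff_set_countable.1 h1
  -- countable unions
  have hcU : ∀ (s : Set ℝ) (f : ℝ → Set ℝ), s.Countable → (∀ x, f x ∈ I) → (⋃ x ∈ s, f x) ∈ I := by
    intro s f hs hf
    rcases s.eq_empty_or_nonempty with rfl | hne
    · simpa using h0
    · obtain ⟨e, he⟩ := hs.exists_eq_range hne
      subst he
      rw [Set.biUnion_range]
      exact hU _ fun n => hf _
  have hU2 : ∀ A ∈ I, ∀ B ∈ I, A ∪ B ∈ I := by
    intro A hA B hB'
    have := hU (fun n => if n = 0 then A else B) (by intro n; split_ifs <;> assumption)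
    refine hsub _ _ ?_ this
    rintro x (hx | hx)
    · exact Set.mem_iUnion.2 ⟨0, by simpa using hx⟩
    · exact Set.mem_iUnion.2 ⟨1, by simpa using hx⟩
  -- enumeration of the Borel base
  have hg : ∃ g : ℝ → Set ℝ, (∀ x, g x ∈ I) ∧ ∀ S ∈ I, ∃ x, S ⊆ g x := by
    have hle : #{B : Set ℝ | MeasurableSet B ∧ B ∈ I} ≤ #ℝ := by
      rw [Cardinal.mk_real]
      refine le_trans (Cardinal.mk_le_mk_of_subset (t := {B : Set ℝ | MeasurableSet B})
        fun B hB => hB.1) ?_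
      have hgen := MeasurableSpace.generateFrom_countableGeneratingSet (α := ℝ)
      have hcount := MeasurableSpace.countable_countableGeneratingSet (α := ℝ)
      have h := MeasurableSpace.cardinal_measurableSet_le_continuum
        ((Cardinal.le_aleph0_iff_set_countable.2 hcount).trans Cardinal.aleph0_le_continuum)
      rwa [hgen] at h
    obtain ⟨e⟩ := hle
    have : Nonempty {B : Set ℝ | MeasurableSet B ∧ B ∈ I} := ⟨⟨∅, MeasurableSet.empty, h0⟩⟩
    refine ⟨fun x => (Function.invFun e x).1, fun x => (Function.invFun e x).2.2, ?_⟩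
    intro S hS
    obtain ⟨B, hBI, hBm, hSB⟩ := hB S hS
    obtain ⟨x, hx⟩ := Function.invFun_surjective e.injective ⟨B, hBm, hBI⟩
    exact ⟨x, by simpa only [hx] using hSB⟩
  obtain ⟨g, hgI, hgS⟩ := hg
  have hch : ∀ x : ℝ, ∃ a : ℝ, ∀ y, ¬ r x y → a ∉ g y ∧ x - a ∉ g y := by
    intro x
    have hV : (⋃ y ∈ {y | r y x} ∪ {x}, g y) ∈ I :=
      hcU _ g ((hseg x).union (Set.countable_singleton x)) hgI
    set V := (⋃ y ∈ {y | r y x} ∪ {x}, g y) with hVd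
    have hW := hU2 _ hV _ (htr x _ (hsc (-1) _ hV))
    have hne : V ∪ (fun y => x + y) '' ((fun y => -1 * y) '' V) ≠ Set.univ := by
      intro h; rw [h] at hW; exact huniv hW
    obtain ⟨a, ha⟩ := (Set.ne_univ_iff_exists_notMem _).1 hne
    refine ⟨a, fun y hy => ?_⟩
    have hgV : g y ⊆ V := by
      have : y ∈ {y | r y x} ∪ {x} := by
        rcases trichotomous_of r x y with h | h | h
        · exact absurd h hy
        · exact Or.inr h.symm
        · exact Or.inl h
      exact Set.subset_biUnion_of_mem (u := g) this
    refine ⟨fun h => ha (Or.inl (hgV h)), fun h => ha (Or.inr ?_)⟩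
    exact ⟨-1 * (x - a), ⟨x - a, hgV h, rfl⟩, by ring⟩
  choose a ha using hch
  set L : Set ℝ := Set.range a ∪ Set.range (fun x => x - a x) with hL
  have hsum : L + L = Set.univ := by
    refine Set.eq_univ_of_forall fun x => ?_
    exact Set.mem_add.2 ⟨a x, Or.inl ⟨x, rfl⟩, x - a x, Or.inr ⟨x, rfl⟩, by ring⟩
  refine ⟨L, ⟨?_, ?_⟩, hsum⟩
  · apply le_antisymm
    · exact (Cardinal.mk_set_le L).trans Cardinal.mk_real.le
    · rw [hCH0, ← Cardinal.succ_aleph0, Order.succ_le_iff]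
      by_contra h
      have hc : L.Countable := Cardinal.le_aleph0_iff_set_countable.1 (not_lt.1 h)
      have := hc.image2 hc (· + ·)
      rw [Set.image2_add, hsum] at this
      exact Cardinal.not_countable_real this
  · intro S hS
    obtain ⟨y, hy⟩ := hgS S hS
    refine (((hseg y).image a).union ((hseg y).image (fun x => x - a x))).mono ?_
    rintro z ⟨⟨x, rfl⟩ | ⟨x, rfl⟩, hz⟩
    · refine Or.inl ⟨x, ?_, rfl⟩
      by_contra h
      exact (ha x y h).1 (hy hz)
    · refine Or.inr ⟨x, ?_, rfl⟩
      by_contra h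
      exact (ha x y h).2 (hy hz)
end
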